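/- arXiv:2207.03016 — 6 statements merged into one kernel-verified Lean document; each statement's English description precedes it below -/
import Mathlib

section
/- Let 0 = u_0 < u_1 < … < u_{n_1+1} = ℓ and 0 = v_0 < v_1 < … < v_{n_2+1} = ℓ be two admissible divisions into blocks. Let 0 = w_0 < w_1 < … < w_{n_3+1} = ℓ be the increasing enumeration of the intersection {u_0,…,u_{n_1+1}} ∩ {v_0,…,v_{n_2+1}}. Then (w_0,…,w_{n_3+1}) is an admissible division into blocks. -/
open Finset

noncomputable section

/-- Membership in the domain `D` of the optimization problem. -/
def memD (ℓ : ℕ) (a b x y : ℕ → ℝ) : Prop :=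
  (∀ i ∈ Finset.Icc 1 ℓ, 0 < x i ∧ 0 < y i) ∧
  (∑ i ∈ Finset.Icc 1 ℓ, (x i + y i)) ≤ 1 ∧
  (∀ m ∈ Finset.Icc 1 ℓ,
    0 ≤ ∑ i ∈ Finset.Icc 1 m, (x i - (a i) ^ 2 / (2 * x i) - (b i) ^ 2 / (2 * y i)))

/-- Membership in the domain `D̂`: elements of `D` where the cumulative condition holds with
equality for `m = ℓ`. -/
def memDhat (ℓ : ℕ) (a b x y : ℕ → ℝ) : Prop :=
  memD ℓ a b x y ∧
  (∑ i ∈ Finset.Icc 1 ℓ, (x i - (a i) ^ 2 / (2 * x i) - (b i) ^ 2 / (2 * y i))) = 0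

/-- The convention `c_0 = c_ℓ = 0`. -/
def cbar (ℓ : ℕ) (c : ℕ → ℝ) (m : ℕ) : ℝ := if m = 0 ∨ m = ℓ then 0 else c m

/-- Membership in `D^m(c, c')`. -/
def memDm (a b : ℕ → ℝ) (N : ℝ) (m : ℕ) (c c' x y : ℝ) : Prop :=
  0 < x ∧ 0 < y ∧ x + y ≤ N ∧ c + x - (a m) ^ 2 / (2 * x) - (b m) ^ 2 / (2 * y) = c'

/-- Membership in `D̃(c_1, …, c_{ℓ-1})`. -/
def memDtilde (ℓ : ℕ) (a b : ℕ → ℝ) (N : ℝ) (c x y : ℕ → ℝ) : Prop :=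
  (∑ i ∈ Finset.Icc 1 ℓ, (x i + y i)) ≤ 1 ∧
  ∀ m ∈ Finset.Icc 1 ℓ, memDm a b N m (cbar ℓ c (m - 1)) (cbar ℓ c m) (x m) (y m)

/-- Membership in `D^c`. -/
def memDc (ℓ : ℕ) (a b : ℕ → ℝ) (N : ℝ) (c : ℕ → ℝ) : Prop :=
  (∀ m ∈ Finset.Icc 1 (ℓ - 1), 0 ≤ c m) ∧ ∃ x y, memDtilde ℓ a b N c x y

/-- `(x, y)` minimizes `x + y` over `D^m(c, c')`. -/
def isArgminDm (a b : ℕ → ℝ) (N : ℝ) (m : ℕ) (c c' x y : ℝ) : Prop :=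
  memDm a b N m c c' x y ∧ ∀ x' y' : ℝ, memDm a b N m c c' x' y' → x + y ≤ x' + y'

/-- The projection `D^m_x(c, C)` of `D^m(c, C)` to the first coordinate. -/
def Dmx (a b : ℕ → ℝ) (N : ℝ) (m : ℕ) (c C : ℝ) : Set ℝ :=
  {x : ℝ | ∃ y : ℝ, memDm a b N m c C x y}

/-- The function `f(c̃) = sqrt((1 + c̃)/2 + sqrt(c̃²/4 + c̃))`. -/
def fval (c : ℝ) : ℝ := Real.sqrt ((1 + c) / 2 + Real.sqrt (c ^ 2 / 4 + c))

/-- `c̃ = (Σ b_i)² / (2 (Σ a_i)²)`. -/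
def ctilde (ℓ : ℕ) (a b : ℕ → ℝ) : ℝ :=
  (∑ i ∈ Finset.Icc 1 ℓ, b i) ^ 2 / (2 * (∑ i ∈ Finset.Icc 1 ℓ, a i) ^ 2)

/-- The objective function `F` on `ℝ^{2ℓ}`. -/
def Fobj (ℓ : ℕ) (a b x y : ℕ → ℝ) : ℝ :=
  (1 - ∑ i ∈ Finset.Icc 1 ℓ, (x i + y i)) *
  (1 - ∑ i ∈ Finset.Icc 1 ℓ, (y i + (a i) ^ 2 / (2 * x i) + (b i) ^ 2 / (2 * y i)))

/-- The late-expensive-obstacles assumption. -/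
def LateExpensive (ℓ : ℕ) (a b : ℕ → ℝ) : Prop :=
  ∀ m, 1 ≤ m → m < ℓ →
    (∑ i ∈ Finset.Icc 1 m, b i) / (∑ i ∈ Finset.Icc 1 m, a i) <
      (∑ i ∈ Finset.Icc (m + 1) ℓ, b i) / (∑ i ∈ Finset.Icc (m + 1) ℓ, a i)

/-- The ratio `(Σ_{j=p}^q b_j) / (Σ_{j=p}^q a_j)`. -/
def ratioBA (a b : ℕ → ℝ) (p q : ℕ) : ℝ :=
  (∑ j ∈ Finset.Icc p q, b j) / (∑ j ∈ Finset.Icc p q, a j)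

/-- `u` (on indices `0, …, n+1`) is an admissible division into blocks. -/
def AdmissibleDiv (ℓ : ℕ) (a b : ℕ → ℝ) (n : ℕ) (u : ℕ → ℕ) : Prop :=
  u 0 = 0 ∧ u (n + 1) = ℓ ∧ (∀ i ≤ n, u i < u (i + 1)) ∧
  ∀ i ≤ n, ∀ m, u i < m → m < u (i + 1) →
    ratioBA a b (u i + 1) m < ratioBA a b (m + 1) (u (i + 1))

/-- The canonical admissible division into blocks: the admissible division whose index
set is the intersection of the index sets of all admissible divisions into blocks. -/
def IsCanonicalDiv (ℓ : ℕ) (a b : ℕ → ℝ) (n : ℕ) (u : ℕ → ℕ) : Prop :=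
  AdmissibleDiv ℓ a b n u ∧
  ∀ k, (∃ i ≤ n + 1, u i = k) ↔
    ∀ (n' : ℕ) (u' : ℕ → ℕ), AdmissibleDiv ℓ a b n' u' → ∃ i ≤ n' + 1, u' i = k

/-- The minimal time to cross one block with branching length `A` and obstacle length `B`. -/
def blockTime (A B : ℝ) : ℝ :=
  A * fval (B ^ 2 / (2 * A ^ 2)) +
    B ^ 2 / (2 * A * (fval (B ^ 2 / (2 * A ^ 2)) - 1 / (2 * fval (B ^ 2 / (2 * A ^ 2)))))

/-- The total optimal time `T*` associated with a division into blocks. -/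
def Tstar (a b : ℕ → ℝ) (n : ℕ) (u : ℕ → ℕ) : ℝ :=
  ∑ i ∈ Finset.range (n + 1),
    blockTime (∑ j ∈ Finset.Icc (u i + 1) (u (i + 1)), a j)
      (∑ j ∈ Finset.Icc (u i + 1) (u (i + 1)), b j)

/-- The coefficient appearing in the formula for the optimal `c_m`. -/
def coefC (ℓ : ℕ) (a b : ℕ → ℝ) (m : ℕ) : ℝ :=
  ((∑ i ∈ Finset.Icc 1 m, a i) * (∑ i ∈ Finset.Icc (m + 1) ℓ, b i) -
    (∑ i ∈ Finset.Icc 1 m, b i) * (∑ i ∈ Finset.Icc (m + 1) ℓ, a i)) /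
    (∑ i ∈ Finset.Icc 1 ℓ, b i)

/-!
For a slope `c` let `T_c k = ∑_{j ≤ k} (b_j - c a_j)`. Since the `a_j` are positive, the inequality
defining admissibility at a point `m` inside a block `(s, t)` says that
`T_c m < max (T_c s) (T_c t)` for every `c`. Hence a division is admissible iff for every `c` and
all breakpoints `s ≤ t`, each maximizer of `T_c` on `[s, t]` is again a breakpoint, and this
property passes to intersections.
-/

/-- `S` contains every maximizer of `f` on an interval whose endpoints lie in `S`. For the tilted
partial sums this is the form of admissibility that is visibly stable under intersection. -/
def PeakClosed {α β : Type*} [Preorder α] [Preorder β] (f : α → β) (S : Set α) : Prop :=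
  ∀ ⦃s⦄, s ∈ S → ∀ ⦃t⦄, t ∈ S → ∀ ⦃m⦄, m ∈ Set.Icc s t → IsMaxOn f (Set.Icc s t) m → m ∈ S

theorem PeakClosed.iInter {ι α β : Type*} [Preorder α] [Preorder β] {f : α → β} {S : ι → Set α}
    (hS : ∀ i, PeakClosed f (S i)) : PeakClosed f (⋂ i, S i) := fun _ hs _ ht _ hm hmax =>
  Set.mem_iInter.2 fun i => hS i (Set.mem_iInter.1 hs i) (Set.mem_iInter.1 ht i) hm hmax

theorem PeakClosed.lt_max {α β : Type*} [PartialOrder α] [LocallyFiniteOrder α] [LinearOrder β]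
    {f : α → β} {S : Set α} (hS : PeakClosed f S) {s t m : α} (hs : s ∈ S) (ht : t ∈ S)
    (hgap : Disjoint (Set.Ioo s t) S) (hm : m ∈ Set.Ioo s t) : f m < max (f s) (f t) := by
  have hmIcc : m ∈ Set.Icc s t := Set.Ioo_subset_Icc_self hm
  obtain ⟨k, hk, hkmax⟩ := Set.exists_max_image _ f (Set.finite_Icc s t) ⟨m, hmIcc⟩
  have hmk : f m < f k := by
    by_contra! hkm
    exact Set.disjoint_left.1 hgap hm (hS hs ht hmIcc fun j hj => (hkmax j hj).trans hkm)
  rcases Set.eq_endpoints_or_mem_Ioo_of_mem_Icc hk with rfl | rfl | hkIoo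
  · exact hmk.trans_le (le_max_left _ _)
  · exact hmk.trans_le (le_max_right _ _)
  · exact absurd (hS hs ht hk hkmax) (Set.disjoint_left.1 hgap hkIoo)

theorem exists_mem_Ico_map_succ {α : Type*} [LinearOrder α] {f : ℕ → α} {p q : ℕ} (hpq : p ≤ q)
    {x : α} (hx : x ∈ Set.Ico (f p) (f q)) :
    ∃ i ∈ Set.Ico p q, x ∈ Set.Ico (f i) (f (i + 1)) := by
  induction q, hpq using Nat.le_induction with
  | base => exact absurd hx.2 hx.1.not_gt
  | succ q hpq ih =>
    rcases lt_or_ge x (f q) with hxq | hqx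
    · obtain ⟨i, hi, hxi⟩ := ih ⟨hx.1, hxq⟩
      exact ⟨i, ⟨hi.1, hi.2.trans q.lt_succ_self⟩, hxi⟩
    · exact ⟨q, ⟨hpq, q.lt_succ_self⟩, hqx, hx.2⟩

/-- The breakpoints `u_0, …, u_{n+1}` of a division into `n + 1` blocks. -/
def breakpoints (n : ℕ) (u : ℕ → ℕ) : Set ℕ := {k | ∃ i ≤ n + 1, u i = k}

section Breakpoints

variable {n : ℕ} {u : ℕ → ℕ}

theorem disjoint_Ioo_breakpoints (hu : MonotoneOn u (Set.Iic (n + 1))) {i : ℕ} (hi : i ≤ n) :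
    Disjoint (Set.Ioo (u i) (u (i + 1))) (breakpoints n u) := by
  rw [Set.disjoint_right]
  rintro _ ⟨j, hj, rfl⟩ ⟨hij, hji⟩
  rcases Nat.lt_or_ge i j with h | h
  · exact hji.not_ge (hu (Set.mem_Iic.2 (by omega)) hj h)
  · exact hij.not_ge (hu hj (Set.mem_Iic.2 (by omega)) h)

theorem exists_block_of_notMem_breakpoints (hu : MonotoneOn u (Set.Iic (n + 1))) {s t m : ℕ}
    (hs : s ∈ breakpoints n u) (ht : t ∈ breakpoints n u) (hm : m ∈ Set.Icc s t)
    (hmu : m ∉ breakpoints n u) :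
    ∃ i ≤ n, m ∈ Set.Ioo (u i) (u (i + 1)) ∧ s ≤ u i ∧ u (i + 1) ≤ t := by
  obtain ⟨p, hp, rfl⟩ := hs
  obtain ⟨q, hq, rfl⟩ := ht
  have hmq : m < u q := hm.2.lt_of_ne fun h => hmu ⟨q, hq, h.symm⟩
  have hpq : p ≤ q := (hu.reflect_lt hp hq (hm.1.trans_lt hmq)).le
  obtain ⟨i, ⟨hpi, hiq⟩, him, hmi⟩ := exists_mem_Ico_map_succ hpq ⟨hm.1, hmq⟩
  have hi : i + 1 ≤ n + 1 := hiq.trans_le hq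
  have hi' : i ≤ n + 1 := i.le_succ.trans hi
  have hne : u i ≠ m := fun h => hmu ⟨i, hi', h⟩
  exact ⟨i, Nat.le_of_succ_le_succ hi, ⟨him.lt_of_ne hne, hmi⟩, hu hp hi' hpi, hu hi hq hiq⟩

theorem peakClosed_breakpoints_iff {β : Type*} [LinearOrder β] (hu : MonotoneOn u (Set.Iic (n + 1)))
    {f : ℕ → β} : PeakClosed f (breakpoints n u) ↔
      ∀ i ≤ n, ∀ m ∈ Set.Ioo (u i) (u (i + 1)), f m < max (f (u i)) (f (u (i + 1))) := by
  refine ⟨fun h i hi m hm => ?_, fun h s hs t ht m hm hmax => ?_⟩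
  · exact h.lt_max ⟨i, Nat.le_succ_of_le hi, rfl⟩ ⟨i + 1, Nat.succ_le_succ hi, rfl⟩
      (disjoint_Ioo_breakpoints hu hi) hm
  · by_contra hmu
    obtain ⟨i, hi, hmi, hsi, hit⟩ := exists_block_of_notMem_breakpoints hu hs ht hm hmu
    have hleft : f (u i) ≤ f m := hmax ⟨hsi, hmi.1.le.trans hm.2⟩
    have hright : f (u (i + 1)) ≤ f m := hmax ⟨hm.1.trans hmi.2.le, hit⟩
    exact (h i hi m hmi).not_ge (max_le hleft hright)

end Breakpoints

/-- `u_0 < ⋯ < u_{n+1}` is a division of `{1, …, ℓ}` into blocks, not necessarily admissible; the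
values of `u` beyond index `n + 1` are irrelevant. -/
structure IsDivision (ℓ n : ℕ) (u : ℕ → ℕ) : Prop where
  zero : u 0 = 0
  last : u (n + 1) = ℓ
  lt_succ : ∀ i ≤ n, u i < u (i + 1)

namespace IsDivision

variable {ℓ n : ℕ} {u : ℕ → ℕ}

theorem monotoneOn (hu : IsDivision ℓ n u) : MonotoneOn u (Set.Iic (n + 1)) :=
  (strictMonoOn_Iic_of_lt_succ fun i hi => hu.lt_succ i (Nat.lt_succ_iff.1 hi)).monotoneOn

theorem le_last (hu : IsDivision ℓ n u) {i : ℕ} (hi : i ≤ n + 1) : u i ≤ ℓ :=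
  hu.last ▸ hu.monotoneOn hi Set.self_mem_Iic hi

end IsDivision

/-- The partial sums `T_c k = ∑_{j=1}^k (b_j - c a_j)`, which measure how far the points
`(∑_{j ≤ k} a_j, ∑_{j ≤ k} b_j)` lie above the line of slope `c` through the origin. -/
def tiltedSum (a b : ℕ → ℝ) (c : ℝ) (k : ℕ) : ℝ := ∑ j ∈ Finset.Icc 1 k, (b j - c * a j)

section Ratio

variable {a b : ℕ → ℝ} {c : ℝ} {p q : ℕ}

theorem tiltedSum_sub_tiltedSum (hpq : p ≤ q) :
    tiltedSum a b c q - tiltedSum a b c p =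
      ∑ j ∈ Finset.Icc (p + 1) q, b j - c * ∑ j ∈ Finset.Icc (p + 1) q, a j := by
  have hsplit := Finset.sum_Ioc_consecutive (fun j => b j - c * a j) p.zero_le hpq
  simp only [← Finset.Icc_add_one_left_eq_Ioc, zero_add] at hsplit
  rw [tiltedSum, tiltedSum, ← hsplit, add_sub_cancel_left, Finset.sum_sub_distrib, Finset.mul_sum]

theorem tiltedSum_lt_tiltedSum_iff_lt_ratioBA (hpq : p ≤ q)
    (ha : 0 < ∑ j ∈ Finset.Icc (p + 1) q, a j) :
    tiltedSum a b c p < tiltedSum a b c q ↔ c < ratioBA a b (p + 1) q := by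
  rw [ratioBA, lt_div_iff₀ ha, ← sub_pos, tiltedSum_sub_tiltedSum hpq, sub_pos]

theorem tiltedSum_lt_tiltedSum_iff_ratioBA_lt (hpq : p ≤ q)
    (ha : 0 < ∑ j ∈ Finset.Icc (p + 1) q, a j) :
    tiltedSum a b c q < tiltedSum a b c p ↔ ratioBA a b (p + 1) q < c := by
  rw [ratioBA, div_lt_iff₀ ha, ← sub_neg, tiltedSum_sub_tiltedSum hpq, sub_neg]

theorem ratioBA_lt_ratioBA_iff_forall_lt_max {s m t : ℕ} (hsm : s < m) (hmt : m < t)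
    (ha : ∀ j ∈ Finset.Icc (s + 1) t, 0 < a j) :
    ratioBA a b (s + 1) m < ratioBA a b (m + 1) t ↔
      ∀ c, tiltedSum a b c m < max (tiltedSum a b c s) (tiltedSum a b c t) := by
  have hleft : 0 < ∑ j ∈ Finset.Icc (s + 1) m, a j :=
    Finset.sum_pos (fun j hj => ha j (Finset.Icc_subset_Icc_right hmt.le hj))
      (Finset.nonempty_Icc.2 hsm)
  have hright : 0 < ∑ j ∈ Finset.Icc (m + 1) t, a j :=
    Finset.sum_pos (fun j hj => ha j (Finset.Icc_subset_Icc_left (by omega) hj))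
      (Finset.nonempty_Icc.2 hmt)
  simp only [lt_max_iff, tiltedSum_lt_tiltedSum_iff_ratioBA_lt hsm.le hleft,
    tiltedSum_lt_tiltedSum_iff_lt_ratioBA hmt.le hright]
  -- For the converse, take `c` to be the left-hand ratio.
  exact ⟨fun h c => LT.lt.gt_or_lt h c, fun h => (h _).resolve_left (lt_irrefl _)⟩

end Ratio

theorem admissibleDiv_iff_forall_peakClosed {ℓ : ℕ} {a b : ℕ → ℝ}
    (ha : ∀ j ∈ Finset.Icc 1 ℓ, 0 < a j) {n : ℕ} {u : ℕ → ℕ} :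
    AdmissibleDiv ℓ a b n u ↔
      IsDivision ℓ n u ∧ ∀ c, PeakClosed (tiltedSum a b c) (breakpoints n u) := by
  have ratio_iff (hu : IsDivision ℓ n u) {i m : ℕ} (hi : i ≤ n) (him : u i < m)
      (hmi : m < u (i + 1)) :
      ratioBA a b (u i + 1) m < ratioBA a b (m + 1) (u (i + 1)) ↔
        ∀ c, tiltedSum a b c m < max (tiltedSum a b c (u i)) (tiltedSum a b c (u (i + 1))) :=
    ratioBA_lt_ratioBA_iff_forall_lt_max him hmi fun j hj =>
      ha j (Finset.Icc_subset_Icc (Nat.le_add_left 1 _) (hu.le_last (Nat.succ_le_succ hi)) hj)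
  constructor
  · rintro ⟨hzero, hlast, hlt, hratio⟩
    have hu : IsDivision ℓ n u := ⟨hzero, hlast, hlt⟩
    exact ⟨hu, fun c => (peakClosed_breakpoints_iff hu.monotoneOn).2 fun i hi m hm =>
      (ratio_iff hu hi hm.1 hm.2).1 (hratio i hi m hm.1 hm.2) c⟩
  · rintro ⟨hu, hpeak⟩
    exact ⟨hu.zero, hu.last, hu.lt_succ, fun i hi m him hmi => (ratio_iff hu hi him hmi).2 fun c =>
      (peakClosed_breakpoints_iff hu.monotoneOn).1 (hpeak c) i hi m ⟨him, hmi⟩⟩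

theorem intersection_admissible_general {ι : Type*} {ℓ : ℕ} {a b : ℕ → ℝ}
    (ha : ∀ j ∈ Finset.Icc 1 ℓ, 0 < a j) {n : ι → ℕ} {u : ι → ℕ → ℕ}
    (hu : ∀ i, AdmissibleDiv ℓ a b (n i) (u i)) {N : ℕ} {w : ℕ → ℕ} (hw : IsDivision ℓ N w)
    (hinter : breakpoints N w = ⋂ i, breakpoints (n i) (u i)) : AdmissibleDiv ℓ a b N w := by
  simp only [admissibleDiv_iff_forall_peakClosed ha] at hu ⊢
  exact ⟨hw, fun c => hinter ▸ PeakClosed.iInter fun i => (hu i).2 c⟩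

/-- The intersection of two admissible divisions into blocks is admissible. -/
theorem intersection_admissible (ℓ : ℕ) (hℓ : 1 ≤ ℓ) (a b : ℕ → ℝ)
    (ha : ∀ i ∈ Finset.Icc 1 ℓ, 0 < a i) (hb : ∀ i ∈ Finset.Icc 1 ℓ, 0 < b i)
    (n1 n2 n3 : ℕ) (u v w : ℕ → ℕ)
    (hu : AdmissibleDiv ℓ a b n1 u) (hv : AdmissibleDiv ℓ a b n2 v)
    (hw0 : w 0 = 0) (hwl : w (n3 + 1) = ℓ) (hwmono : ∀ i ≤ n3, w i < w (i + 1))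
    (hwset : ∀ k : ℕ, (∃ i ≤ n3 + 1, w i = k) ↔
      ((∃ i ≤ n1 + 1, u i = k) ∧ (∃ j ≤ n2 + 1, v j = k))) :
    AdmissibleDiv ℓ a b n3 w := by
  have hinter : breakpoints n3 w = ⋂ i : Bool, breakpoints (cond i n1 n2) (cond i u v) :=
    Set.ext fun k => (hwset k).trans (by simp [breakpoints, and_comm])
  exact intersection_admissible_general ha (Bool.forall_bool.2 ⟨hv, hu⟩) ⟨hw0, hwl, hwmono⟩ hinter
end
end

section
/- The division into blocks 0 = s_0 < s_1 < … < s_n < s_{n+1} = ℓ, where {s_1,…,s_n} = {m ∈ {1,…,ℓ−1} : (Σ_{i=1}^m b_i)/(Σ_{i=1}^m a_i) ≥ (Σ_{i=m+1}^ℓ b_i)/(Σ_{i=m+1}^ℓ a_i)}, is admissible. -/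
open Finset

noncomputable section

/-! Let `r` be the ratio of the whole landscape and let `E m = ∑_{j ≤ m} (b_j - r a_j)`, so that
`E 0 = E ℓ = 0`. The ratio of the block `p + 1, …, q` is less than `r` exactly when `E q < E p`, and
greater exactly when `E p < E q`. Hence the `s_i` are precisely the points of `{0, …, ℓ}` at which
`E` is nonnegative, and `E` is negative strictly between two consecutive ones: a block cut at such
a point has ratio below `r` to the left of the cut and above `r` to the right. -/

/-- The excess `∑_{j ≤ m} (b_j - r a_j)` of the first `m` obstacles over the slope `r`. Comparing a
block ratio with `r` amounts to comparing the excess at the two ends of the block. -/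
def excess (a b : ℕ → ℝ) (r : ℝ) (m : ℕ) : ℝ :=
  ∑ j ∈ Icc 1 m, (b j - r * a j)

section Excess

variable {ℓ m p q : ℕ} {a b : ℕ → ℝ} {r : ℝ}

@[simp]
theorem excess_zero : excess a b r 0 = 0 := by
  simp [excess]

theorem excess_sub_excess (hpq : p ≤ q) :
    excess a b r q - excess a b r p =
      ∑ j ∈ Icc (p + 1) q, b j - r * ∑ j ∈ Icc (p + 1) q, a j := by
  have sum_split := sum_Ioc_consecutive (fun j ↦ b j - r * a j) p.zero_le hpq
  simp only [← Icc_add_one_left_eq_Ioc, zero_add] at sum_split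
  rw [excess, excess, ← sum_split, add_sub_cancel_left, sum_sub_distrib, mul_sum]

theorem sum_Icc_add_one_pos (ha : ∀ j ∈ Icc 1 ℓ, 0 < a j) (hpq : p < q) (hqℓ : q ≤ ℓ) :
    0 < ∑ j ∈ Icc (p + 1) q, a j :=
  sum_pos (fun j hj ↦ ha j (Icc_subset_Icc (Nat.le_add_left 1 p) hqℓ hj)) (nonempty_Icc.2 hpq)

theorem ratioBA_lt_iff_excess_lt (ha : ∀ j ∈ Icc 1 ℓ, 0 < a j) (hpq : p < q) (hqℓ : q ≤ ℓ) :
    ratioBA a b (p + 1) q < r ↔ excess a b r q < excess a b r p := by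
  rw [ratioBA, div_lt_iff₀ (sum_Icc_add_one_pos ha hpq hqℓ), ← sub_neg,
    ← excess_sub_excess hpq.le, sub_neg]

theorem lt_ratioBA_iff_excess_lt (ha : ∀ j ∈ Icc 1 ℓ, 0 < a j) (hpq : p < q) (hqℓ : q ≤ ℓ) :
    r < ratioBA a b (p + 1) q ↔ excess a b r p < excess a b r q := by
  rw [ratioBA, lt_div_iff₀ (sum_Icc_add_one_pos ha hpq hqℓ), ← sub_pos,
    ← excess_sub_excess hpq.le, sub_pos]

theorem ratioBA_lt_ratioBA_of_excess_lt (ha : ∀ j ∈ Icc 1 ℓ, 0 < a j) (hpm : p < m) (hmq : m < q)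
    (hqℓ : q ≤ ℓ) (hp : excess a b r m < excess a b r p) (hq : excess a b r m < excess a b r q) :
    ratioBA a b (p + 1) m < ratioBA a b (m + 1) q :=
  calc
    ratioBA a b (p + 1) m < r := (ratioBA_lt_iff_excess_lt ha hpm (hmq.le.trans hqℓ)).2 hp
    _ < ratioBA a b (m + 1) q := (lt_ratioBA_iff_excess_lt ha hmq hqℓ).2 hq

theorem ratioBA_le_ratioBA_of_le_excess (ha : ∀ j ∈ Icc 1 ℓ, 0 < a j) (hpm : p < m) (hmq : m < q)
    (hqℓ : q ≤ ℓ) (hp : excess a b r p ≤ excess a b r m) (hq : excess a b r q ≤ excess a b r m) :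
    ratioBA a b (m + 1) q ≤ ratioBA a b (p + 1) m :=
  calc
    ratioBA a b (m + 1) q ≤ r :=
      le_of_not_gt <| mt (lt_ratioBA_iff_excess_lt ha hmq hqℓ).1 hq.not_gt
    _ ≤ ratioBA a b (p + 1) m :=
      le_of_not_gt <| mt (ratioBA_lt_iff_excess_lt ha hpm (hmq.le.trans hqℓ)).1 hp.not_gt

theorem excess_ratioBA_self (ha : ∑ j ∈ Icc 1 ℓ, a j ≠ 0) :
    excess a b (ratioBA a b 1 ℓ) ℓ = 0 := by
  rw [excess, sum_sub_distrib, ← mul_sum, ratioBA, div_mul_cancel₀ _ ha, sub_self]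

theorem ratioBA_le_ratioBA_iff_excess_nonneg (ha : ∀ j ∈ Icc 1 ℓ, 0 < a j) (hm : 0 < m)
    (hmℓ : m < ℓ) :
    ratioBA a b (m + 1) ℓ ≤ ratioBA a b 1 m ↔ 0 ≤ excess a b (ratioBA a b 1 ℓ) m := by
  have excess_ℓ : excess a b (ratioBA a b 1 ℓ) ℓ = 0 :=
    excess_ratioBA_self (sum_Icc_add_one_pos ha (hm.trans hmℓ) le_rfl).ne'
  refine ⟨fun h ↦ ?_, fun h ↦ ?_⟩
  · contrapose! h
    exact ratioBA_lt_ratioBA_of_excess_lt ha hm hmℓ le_rfl (h.trans_eq excess_zero.symm)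
      (h.trans_eq excess_ℓ.symm)
  · exact ratioBA_le_ratioBA_of_le_excess ha hm hmℓ le_rfl (excess_zero.trans_le h)
      (excess_ℓ.trans_le h)

end Excess

theorem strictMonoOn_Iic_of_lt_add_one {α : Type*} [Preorder α] {n : ℕ} {s : ℕ → α}
    (hs : ∀ i ≤ n, s i < s (i + 1)) :
    StrictMonoOn s (Set.Iic (n + 1)) :=
  strictMonoOn_Iic_of_lt_succ fun i hi ↦ hs i (Nat.le_of_lt_succ hi)

theorem apply_ne_of_lt_of_lt_apply_add_one {α : Type*} [Preorder α] {n i k : ℕ} {s : ℕ → α}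
    {x : α} (hs : MonotoneOn s (Set.Iic n)) (hi : i < n) (hk : k ≤ n) (hix : s i < x)
    (hxi : x < s (i + 1)) : s k ≠ x := by
  rintro rfl
  have hik : i < k := hs.reflect_lt hi.le hk hix
  have hki : k < i + 1 := hs.reflect_lt hk hi hxi
  lia

theorem admissibleDiv_of_excess_nonneg_of_excess_neg {ℓ n : ℕ} {a b : ℕ → ℝ} {r : ℝ} {s : ℕ → ℕ}
    (ha : ∀ j ∈ Icc 1 ℓ, 0 < a j) (hs0 : s 0 = 0) (hsl : s (n + 1) = ℓ)
    (hsmono : ∀ i ≤ n, s i < s (i + 1)) (hnonneg : ∀ i ≤ n + 1, 0 ≤ excess a b r (s i))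
    (hneg : ∀ m < ℓ, (∀ i ≤ n + 1, s i ≠ m) → excess a b r m < 0) :
    AdmissibleDiv ℓ a b n s := by
  have s_mono : MonotoneOn s (Set.Iic (n + 1)) :=
    (strictMonoOn_Iic_of_lt_add_one hsmono).monotoneOn
  refine ⟨hs0, hsl, hsmono, fun i hi m him hmi ↦ ?_⟩
  have hi_le : i + 1 ≤ n + 1 := Nat.succ_le_succ hi
  have s_le : s (i + 1) ≤ ℓ := hsl ▸ s_mono hi_le Set.self_mem_Iic hi_le
  have excess_neg : excess a b r m < 0 := hneg m (hmi.trans_le s_le) fun k hk ↦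
    apply_ne_of_lt_of_lt_apply_add_one s_mono hi_le hk him hmi
  exact ratioBA_lt_ratioBA_of_excess_lt ha him hmi s_le
    (excess_neg.trans_le (hnonneg i (Nat.le_succ_of_le hi)))
    (excess_neg.trans_le (hnonneg (i + 1) hi_le))

theorem s_division_admissible_general (ℓ : ℕ) (a b : ℕ → ℝ) (ha : ∀ i ∈ Icc 1 ℓ, 0 < a i)
    (n : ℕ) (s : ℕ → ℕ)
    (hs0 : s 0 = 0) (hsl : s (n + 1) = ℓ) (hsmono : ∀ i ≤ n, s i < s (i + 1))
    (hsset : ∀ m : ℕ, (∃ i : ℕ, 1 ≤ i ∧ i ≤ n ∧ s i = m) ↔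
      (1 ≤ m ∧ m < ℓ ∧ ratioBA a b (m + 1) ℓ ≤ ratioBA a b 1 m)) :
    AdmissibleDiv ℓ a b n s := by
  have hℓ : 0 < ℓ :=
    hs0 ▸ hsl ▸ strictMonoOn_Iic_of_lt_add_one hsmono (by simp) (by simp) n.succ_pos
  refine admissibleDiv_of_excess_nonneg_of_excess_neg (r := ratioBA a b 1 ℓ) ha hs0 hsl hsmono
    (fun i hi ↦ ?nonneg) (fun m hmℓ hms ↦ ?neg)
  case nonneg =>
    obtain rfl | rfl | ⟨hi_pos, hi_le⟩ : i = 0 ∨ i = n + 1 ∨ 1 ≤ i ∧ i ≤ n := by lia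
    · rw [hs0, excess_zero]
    · rw [hsl, excess_ratioBA_self (sum_Icc_add_one_pos ha hℓ le_rfl).ne']
    · obtain ⟨hs_pos, hs_lt, hs_ratio⟩ := (hsset (s i)).1 ⟨i, hi_pos, hi_le, rfl⟩
      exact (ratioBA_le_ratioBA_iff_excess_nonneg ha hs_pos hs_lt).1 hs_ratio
  case neg =>
    have hm : 0 < m := Nat.pos_of_ne_zero (hs0 ▸ hms 0 (Nat.zero_le _)).symm
    by_contra! h
    have hratio := (ratioBA_le_ratioBA_iff_excess_nonneg ha hm hmℓ).2 h
    obtain ⟨i, -, hi, him⟩ := (hsset m).2 ⟨hm, hmℓ, hratio⟩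
    exact hms i (Nat.le_succ_of_le hi) him

/-- The division into blocks `0 = s_0 < s_1 < … < s_n < s_{n+1} = ℓ`, where
`{s_1,…,s_n}` is the set of `m ∈ {1,…,ℓ−1}` with
`(Σ_{i≤m} b_i)/(Σ_{i≤m} a_i) ≥ (Σ_{i>m} b_i)/(Σ_{i>m} a_i)`, is admissible. -/
theorem s_division_admissible (ℓ : ℕ) (hℓ : 1 ≤ ℓ) (a b : ℕ → ℝ)
    (ha : ∀ i ∈ Finset.Icc 1 ℓ, 0 < a i) (hb : ∀ i ∈ Finset.Icc 1 ℓ, 0 < b i)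
    (n : ℕ) (s : ℕ → ℕ)
    (hs0 : s 0 = 0) (hsl : s (n + 1) = ℓ) (hsmono : ∀ i ≤ n, s i < s (i + 1))
    (hsset : ∀ m : ℕ, (∃ i : ℕ, 1 ≤ i ∧ i ≤ n ∧ s i = m) ↔
      (1 ≤ m ∧ m < ℓ ∧ ratioBA a b (m + 1) ℓ ≤ ratioBA a b 1 m)) :
    AdmissibleDiv ℓ a b n s :=
  s_division_admissible_general ℓ a b ha n s hs0 hsl hsmono hsset
end
end

section
/- If there exist ĩ ∈ {1,…,n} and j̃ ∈ {ĩ+2,…,n} such that (Σ_{k=s_ĩ+1}^{s_i} b_k)/(Σ_{k=s_ĩ+1}^{s_i} a_k) < (Σ_{k=s_i+1}^{s_j̃} b_k)/(Σ_{k=s_i+1}^{s_j̃} a_k) for all i = ĩ+1,…,j̃−1, then (Σ_{k=s_ĩ+1}^m b_k)/(Σ_{k=s_ĩ+1}^m a_k) < (Σ_{k=m+1}^{s_j̃} b_k)/(Σ_{k=m+1}^{s_j̃} a_k) for all m = s_ĩ+1,…,s_j̃−1. -/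
open Finset

noncomputable section

/-!
Let `P m` be the point with coordinates `∑ j ∈ Icc 1 m, a j` and `∑ j ∈ Icc 1 m, b j`, so that
`ratioBA a b (p + 1) q` is the slope of the segment from `P p` to `P q`. An index `0 < m < ℓ` is one
of the `s i` exactly when `P m` lies on or above the chord from `P 0` to `P ℓ`. If `m` is none of
them, then `P m` lies strictly below the chord while `P (s ti)` and `P (s tj)` do not, so the slope
of the chord separates the slope from `P (s ti)` to `P m` from the slope from `P m` to `P (s tj)`.
-/

/-- The height of the point `(∑ j ∈ Icc 1 m, a j, ∑ j ∈ Icc 1 m, b j)` above the line of slope `r`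
through the origin. Comparing heights at two indices compares `r` with the slope `ratioBA` between
them. -/
def heightAbove (a b : ℕ → ℝ) (r : ℝ) (m : ℕ) : ℝ :=
  ∑ j ∈ Icc 1 m, (b j - r * a j)

section Slopes

variable {a b : ℕ → ℝ} {r : ℝ} {p m q ℓ : ℕ}

@[simp]
theorem heightAbove_zero : heightAbove a b r 0 = 0 := by
  simp [heightAbove]

theorem heightAbove_sub_heightAbove (hpq : p ≤ q) :
    heightAbove a b r q - heightAbove a b r p =
      ∑ j ∈ Icc (p + 1) q, b j - r * ∑ j ∈ Icc (p + 1) q, a j := by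
  have split : heightAbove a b r p + ∑ j ∈ Icc (p + 1) q, (b j - r * a j) =
      heightAbove a b r q := by
    simpa only [heightAbove, ← Icc_add_one_left_eq_Ioc, zero_add] using
      sum_Ioc_consecutive (fun j ↦ b j - r * a j) p.zero_le hpq
  rw [← split, add_sub_cancel_left, sum_sub_distrib, mul_sum]

theorem sum_Icc_pos (hpq : p ≤ q) (ha : ∀ i ∈ Icc p q, 0 < a i) :
    0 < ∑ j ∈ Icc p q, a j :=
  sum_pos ha (nonempty_Icc.2 hpq)

theorem ratioBA_lt_iff_heightAbove_lt (hpq : p < q) (ha : ∀ i ∈ Icc (p + 1) q, 0 < a i) :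
    ratioBA a b (p + 1) q < r ↔ heightAbove a b r q < heightAbove a b r p := by
  rw [ratioBA, div_lt_iff₀ (sum_Icc_pos hpq ha), ← sub_neg,
    ← heightAbove_sub_heightAbove hpq.le, sub_neg]

theorem lt_ratioBA_iff_heightAbove_lt (hpq : p < q) (ha : ∀ i ∈ Icc (p + 1) q, 0 < a i) :
    r < ratioBA a b (p + 1) q ↔ heightAbove a b r p < heightAbove a b r q := by
  rw [ratioBA, lt_div_iff₀ (sum_Icc_pos hpq ha), ← sub_pos,
    ← heightAbove_sub_heightAbove hpq.le, sub_pos]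

theorem ratioBA_lt_ratioBA_of_heightAbove_lt (hpm : p < m) (hmq : m < q)
    (ha : ∀ i ∈ Icc (p + 1) q, 0 < a i) (hp : heightAbove a b r m < heightAbove a b r p)
    (hq : heightAbove a b r m < heightAbove a b r q) :
    ratioBA a b (p + 1) m < ratioBA a b (m + 1) q :=
  calc
    ratioBA a b (p + 1) m < r :=
      (ratioBA_lt_iff_heightAbove_lt hpm fun i hi ↦ ha i (Icc_subset_Icc_right hmq.le hi)).2 hp
    _ < ratioBA a b (m + 1) q :=
      (lt_ratioBA_iff_heightAbove_lt hmq fun i hi ↦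
        ha i (Icc_subset_Icc_left (by gcongr) hi)).2 hq

theorem ratioBA_le_ratioBA_of_heightAbove_le (hpm : p < m) (hmq : m < q)
    (ha : ∀ i ∈ Icc (p + 1) q, 0 < a i) (hp : heightAbove a b r p ≤ heightAbove a b r m)
    (hq : heightAbove a b r q ≤ heightAbove a b r m) :
    ratioBA a b (m + 1) q ≤ ratioBA a b (p + 1) m :=
  calc
    ratioBA a b (m + 1) q ≤ r :=
      not_lt.1 <| (lt_ratioBA_iff_heightAbove_lt hmq fun i hi ↦
        ha i (Icc_subset_Icc_left (by gcongr) hi)).not.2 hq.not_gt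
    _ ≤ ratioBA a b (p + 1) m :=
      not_lt.1 <| (ratioBA_lt_iff_heightAbove_lt hpm fun i hi ↦
        ha i (Icc_subset_Icc_right hmq.le hi)).not.2 hp.not_gt

theorem heightAbove_ratioBA_self (ha : ∀ i ∈ Icc 1 ℓ, 0 < a i) :
    heightAbove a b (ratioBA a b 1 ℓ) ℓ = 0 := by
  rcases ℓ.eq_zero_or_pos with rfl | hℓ
  · exact heightAbove_zero
  · have sum_ne_zero : ∑ j ∈ Icc 1 ℓ, a j ≠ 0 := (sum_Icc_pos hℓ ha).ne'
    rw [heightAbove, sum_sub_distrib, ← mul_sum, ratioBA, div_mul_cancel₀ _ sum_ne_zero, sub_self]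

theorem ratioBA_le_ratioBA_iff_heightAbove_nonneg (hm : 0 < m) (hmℓ : m < ℓ)
    (ha : ∀ i ∈ Icc 1 ℓ, 0 < a i) :
    ratioBA a b (m + 1) ℓ ≤ ratioBA a b 1 m ↔ 0 ≤ heightAbove a b (ratioBA a b 1 ℓ) m := by
  have height_zero : heightAbove a b (ratioBA a b 1 ℓ) 0 = 0 := heightAbove_zero
  have height_end : heightAbove a b (ratioBA a b 1 ℓ) ℓ = 0 := heightAbove_ratioBA_self ha
  constructor
  · contrapose!
    intro below
    exact ratioBA_lt_ratioBA_of_heightAbove_lt hm hmℓ ha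
      (below.trans_eq height_zero.symm) (below.trans_eq height_end.symm)
  · intro above
    exact ratioBA_le_ratioBA_of_heightAbove_le hm hmℓ ha
      (height_zero.trans_le above) (height_end.trans_le above)

end Slopes

theorem heightAbove_nonneg_of_ratioBA_le {ℓ : ℕ} {a b : ℕ → ℝ}
    (ha : ∀ i ∈ Icc 1 ℓ, 0 < a i) {n : ℕ} {s : ℕ → ℕ} (hs0 : s 0 = 0) (hsl : s (n + 1) = ℓ)
    (hsset : ∀ i, 1 ≤ i → i ≤ n →
      1 ≤ s i ∧ s i < ℓ ∧ ratioBA a b (s i + 1) ℓ ≤ ratioBA a b 1 (s i))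
    {i : ℕ} (hi : i ≤ n + 1) :
    0 ≤ heightAbove a b (ratioBA a b 1 ℓ) (s i) := by
  rcases i.eq_zero_or_pos with rfl | hi_pos
  · rw [hs0, heightAbove_zero]
  rcases hi.eq_or_lt with rfl | hi_lt
  · rw [hsl, heightAbove_ratioBA_self ha]
  · obtain ⟨hpos, hlt, hratio⟩ := hsset i hi_pos (Nat.le_of_lt_succ hi_lt)
    exact (ratioBA_le_ratioBA_iff_heightAbove_nonneg hpos hlt ha).1 hratio

theorem ratio_ineq_propagates_general {ℓ : ℕ} {a b : ℕ → ℝ} (ha : ∀ i ∈ Icc 1 ℓ, 0 < a i)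
    {n : ℕ} {s : ℕ → ℕ} (hs0 : s 0 = 0) (hsl : s (n + 1) = ℓ)
    (hsmono : ∀ i ≤ n, s i < s (i + 1))
    (hsset : ∀ m : ℕ, (∃ i : ℕ, 1 ≤ i ∧ i ≤ n ∧ s i = m) ↔
      (1 ≤ m ∧ m < ℓ ∧ ratioBA a b (m + 1) ℓ ≤ ratioBA a b 1 m))
    {ti tj : ℕ} (htij : ti ≤ tj) (htjn : tj ≤ n + 1)
    (hhyp : ∀ i : ℕ, ti < i → i < tj →
      ratioBA a b (s ti + 1) (s i) < ratioBA a b (s i + 1) (s tj))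
    {m : ℕ} (hm_gt : s ti < m) (hm_lt : m < s tj) :
    ratioBA a b (s ti + 1) m < ratioBA a b (m + 1) (s tj) := by
  have s_strictMono : StrictMonoOn s (Set.Iic (n + 1)) :=
    strictMonoOn_Iic_of_lt_succ fun i hi ↦ hsmono i (Nat.le_of_lt_succ hi)
  have htin : ti ≤ n + 1 := htij.trans htjn
  have stj_le : s tj ≤ ℓ := hsl ▸ s_strictMono.monotoneOn htjn Set.self_mem_Iic htjn
  have height_nonneg {i : ℕ} (hi : i ≤ n + 1) : 0 ≤ heightAbove a b (ratioBA a b 1 ℓ) (s i) :=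
    heightAbove_nonneg_of_ratioBA_le ha hs0 hsl
      (fun k hk_pos hk_le ↦ (hsset (s k)).1 ⟨k, hk_pos, hk_le, rfl⟩) hi
  have m_pos : 0 < m := Nat.zero_lt_of_lt hm_gt
  have m_lt : m < ℓ := hm_lt.trans_le stj_le
  rcases le_or_gt 0 (heightAbove a b (ratioBA a b 1 ℓ) m) with above | below
  · obtain ⟨i, -, hin, rfl⟩ := (hsset m).2
      ⟨m_pos, m_lt, (ratioBA_le_ratioBA_iff_heightAbove_nonneg m_pos m_lt ha).2 above⟩
    have hin' : i ≤ n + 1 := Nat.le_succ_of_le hin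
    exact hhyp i ((s_strictMono.lt_iff_lt htin hin').1 hm_gt)
      ((s_strictMono.lt_iff_lt hin' htjn).1 hm_lt)
  · exact ratioBA_lt_ratioBA_of_heightAbove_lt hm_gt hm_lt
      (fun i hi ↦ ha i (Icc_subset_Icc (Nat.le_add_left 1 _) stj_le hi))
      (below.trans_le (height_nonneg htin)) (below.trans_le (height_nonneg htjn))

/-- If the ratio inequality holds along the `s_i` between `s_ĩ` and `s_j̃`,
then it holds for all intermediate indices `m`. -/
theorem ratio_ineq_propagates (ℓ : ℕ) (hℓ : 1 ≤ ℓ) (a b : ℕ → ℝ)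
    (ha : ∀ i ∈ Finset.Icc 1 ℓ, 0 < a i) (hb : ∀ i ∈ Finset.Icc 1 ℓ, 0 < b i)
    (n : ℕ) (s : ℕ → ℕ)
    (hs0 : s 0 = 0) (hsl : s (n + 1) = ℓ) (hsmono : ∀ i ≤ n, s i < s (i + 1))
    (hsset : ∀ m : ℕ, (∃ i : ℕ, 1 ≤ i ∧ i ≤ n ∧ s i = m) ↔
      (1 ≤ m ∧ m < ℓ ∧ ratioBA a b (m + 1) ℓ ≤ ratioBA a b 1 m))
    (ti tj : ℕ) (hti1 : 1 ≤ ti) (htin : ti ≤ n) (htij : ti + 2 ≤ tj) (htjn : tj ≤ n)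
    (hhyp : ∀ i : ℕ, ti < i → i < tj →
      ratioBA a b (s ti + 1) (s i) < ratioBA a b (s i + 1) (s tj)) :
    ∀ m : ℕ, s ti < m → m < s tj →
      ratioBA a b (s ti + 1) m < ratioBA a b (m + 1) (s tj) :=
  fun _ ↦ ratio_ineq_propagates_general ha hs0 hsl hsmono hsset (by omega) (by omega) hhyp
end
end

section
/- D̂ is nonempty if and only if T* ≤ 1. -/
open Finset

noncomputable section

/-!
Everything depends on a block with sums `A = ∑ a`, `B = ∑ b` through its ratio `r = B / A`.

*Lower bound.* For slopes `f = xSlope r`, `μ = ySlope r` and the Lagrange multiplier `2 μ²`, AM–GM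
applied to each obstacle and summed over the block bounds the time spent in the block from below by
its `blockTime` plus `2 μ²` times the surplus accumulated in it. If two neighbouring blocks had
increasing ratios, merging them would again give an admissible division, so the ratios of the
canonical division decrease from block to block. Hence so do the multipliers, and by Abel summation
nonnegative cumulative surpluses make the total surplus contribution nonnegative.

*Attainment.* With `x j = a j * f` and `y j = b j * μ`, the surplus accumulated from the beginning
of the block up to `m` is a positive multiple of `r * ∑ a - ∑ b`. It vanishes at the end of the
block, and admissibility is exactly what makes it nonnegative in between.
-/

section BlockSum

/-- The sum of `g` over the obstacles `p + 1, …, q` of the block between the breaks `p` and `q`,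
with the index set written as in `Tstar` and `ratioBA`. -/
def blockSum (g : ℕ → ℝ) (p q : ℕ) : ℝ := ∑ j ∈ Icc (p + 1) q, g j

variable {a b g : ℕ → ℝ} {p m q : ℕ}

lemma blockSum_add_blockSum (g : ℕ → ℝ) (hpm : p ≤ m) (hmq : m ≤ q) :
    blockSum g p m + blockSum g m q = blockSum g p q := by
  simpa only [blockSum, Icc_add_one_left_eq_Ioc] using sum_Ioc_consecutive g hpm hmq

lemma blockSum_pos (hpq : p < q) (hg : ∀ j ∈ Icc (p + 1) q, 0 < g j) : 0 < blockSum g p q :=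
  sum_pos hg (nonempty_Icc.2 hpq)

lemma sum_range_blockSum_consecutive (g : ℕ → ℝ) {u : ℕ → ℕ} {k : ℕ}
    (hu : MonotoneOn u (Set.Iic k)) :
    ∑ i ∈ range k, blockSum g (u i) (u (i + 1)) = blockSum g (u 0) (u k) := by
  induction k with
  | zero => simp [blockSum]
  | succ k ih =>
    rw [sum_range_succ, ih (hu.mono (Set.Iic_subset_Iic.2 k.le_succ))]
    exact blockSum_add_blockSum g (hu (by simp) (by simp) k.zero_le)
      (hu (by simp) (by simp) k.le_succ)

lemma ratioBA_eq_blockSum_div (a b : ℕ → ℝ) (p q : ℕ) :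
    ratioBA a b (p + 1) q = blockSum b p q / blockSum a p q := rfl

lemma ratioBA_pos (hpq : p < q) (ha : ∀ j ∈ Icc (p + 1) q, 0 < a j)
    (hb : ∀ j ∈ Icc (p + 1) q, 0 < b j) : 0 < ratioBA a b (p + 1) q :=
  div_pos (blockSum_pos hpq hb) (blockSum_pos hpq ha)

lemma lt_ratioBA_of_le_of_lt {c : ℝ} (hpm : p < m) (hmq : m < q)
    (ha : ∀ j ∈ Icc (p + 1) q, 0 < a j) (hleft : c ≤ ratioBA a b (p + 1) m)
    (hright : c < ratioBA a b (m + 1) q) : c < ratioBA a b (p + 1) q := by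
  have hA₁ := blockSum_pos hpm fun j hj => ha j (Icc_subset_Icc_right hmq.le hj)
  have hA₂ := blockSum_pos hmq fun j hj => ha j (Icc_subset_Icc_left (by lia) hj)
  rw [ratioBA_eq_blockSum_div] at *
  rw [← blockSum_add_blockSum a hpm.le hmq.le, ← blockSum_add_blockSum b hpm.le hmq.le,
    lt_div_iff₀ (add_pos hA₁ hA₂)]
  rw [le_div_iff₀ hA₁] at hleft
  rw [lt_div_iff₀ hA₂] at hright
  linarith

lemma ratioBA_lt_of_lt_of_le {c : ℝ} (hpm : p < m) (hmq : m < q)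
    (ha : ∀ j ∈ Icc (p + 1) q, 0 < a j) (hleft : ratioBA a b (p + 1) m < c)
    (hright : ratioBA a b (m + 1) q ≤ c) : ratioBA a b (p + 1) q < c := by
  have hA₁ := blockSum_pos hpm fun j hj => ha j (Icc_subset_Icc_right hmq.le hj)
  have hA₂ := blockSum_pos hmq fun j hj => ha j (Icc_subset_Icc_left (by lia) hj)
  rw [ratioBA_eq_blockSum_div] at *
  rw [← blockSum_add_blockSum a hpm.le hmq.le, ← blockSum_add_blockSum b hpm.le hmq.le,
    div_lt_iff₀ (add_pos hA₁ hA₂)]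
  rw [div_lt_iff₀ hA₁] at hleft
  rw [div_le_iff₀ hA₂] at hright
  linarith

/-- The condition of `AdmissibleDiv` on the single block between the breaks `p` and `q`. -/
def AdmissibleBlock (a b : ℕ → ℝ) (p q : ℕ) : Prop :=
  ∀ m, p < m → m < q → ratioBA a b (p + 1) m < ratioBA a b (m + 1) q

lemma AdmissibleBlock.merge (hleft : AdmissibleBlock a b p m) (hright : AdmissibleBlock a b m q)
    (hpm : p < m) (hmq : m < q) (ha : ∀ j ∈ Icc (p + 1) q, 0 < a j)
    (hlt : ratioBA a b (p + 1) m < ratioBA a b (m + 1) q) : AdmissibleBlock a b p q := by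
  intro s hps hsq
  rcases lt_trichotomy s m with hsm | rfl | hms
  · have hsplit := hleft s hps hsm
    have hprefix : ratioBA a b (p + 1) s < ratioBA a b (p + 1) m :=
      lt_ratioBA_of_le_of_lt hps hsm (fun j hj => ha j (Icc_subset_Icc_right hmq.le hj))
        le_rfl hsplit
    exact lt_ratioBA_of_le_of_lt hsm hmq (fun j hj => ha j (Icc_subset_Icc_left (by lia) hj))
      hsplit.le (hprefix.trans hlt)
  · exact hlt
  · have hsplit := hright s hms hsq
    have hsuffix : ratioBA a b (m + 1) q < ratioBA a b (s + 1) q :=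
      ratioBA_lt_of_lt_of_le hms hsq (fun j hj => ha j (Icc_subset_Icc_left (by lia) hj))
        hsplit le_rfl
    exact ratioBA_lt_of_lt_of_le hpm hms (fun j hj => ha j (Icc_subset_Icc_right hsq.le hj))
      (hlt.trans hsuffix) hsplit.le

end BlockSum

section Slopes

/-- The optimal value of `x j / a j` in a block with ratio `(∑ b) / (∑ a) = r`. -/
def xSlope (r : ℝ) : ℝ := fval (r ^ 2 / 2)

/-- The optimal value of `y j / b j` in a block with ratio `(∑ b) / (∑ a) = r`. -/
def ySlope (r : ℝ) : ℝ := r / (2 * (xSlope r - 1 / (2 * xSlope r)))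

variable {c r : ℝ}

lemma fval_sq (hc : 0 ≤ c) : fval c ^ 2 = (1 + c) / 2 + √(c ^ 2 / 4 + c) :=
  Real.sq_sqrt (by positivity)

lemma fval_monotoneOn : MonotoneOn fval (Set.Ici 0) := by
  intro c (hc : 0 ≤ c) d _ hcd
  unfold fval
  gcongr

lemma xSlope_pos (r : ℝ) : 0 < xSlope r := by
  unfold xSlope fval
  positivity

lemma one_lt_two_mul_xSlope_sq (hr : 0 < r) : 1 < 2 * xSlope r ^ 2 := by
  have hsqrt := Real.sqrt_nonneg ((r ^ 2 / 2) ^ 2 / 4 + r ^ 2 / 2)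
  rw [xSlope, fval_sq (by positivity)]
  linarith [pow_pos hr 2]

lemma sq_two_mul_xSlope_sq_sub_one (r : ℝ) :
    (2 * xSlope r ^ 2 - 1) ^ 2 = r ^ 2 * (2 * xSlope r ^ 2 + 1) := by
  have hsqrt := Real.sq_sqrt (show 0 ≤ (r ^ 2 / 2) ^ 2 / 4 + r ^ 2 / 2 by positivity)
  rw [xSlope, fval_sq (by positivity)]
  linear_combination 4 * hsqrt

lemma ySlope_eq (r : ℝ) : ySlope r = r * xSlope r / (2 * xSlope r ^ 2 - 1) := by
  have hf := (xSlope_pos r).ne'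
  have hden : 2 * (xSlope r - 1 / (2 * xSlope r)) = (2 * xSlope r ^ 2 - 1) / xSlope r := by
    field_simp
  rw [ySlope, hden, div_div_eq_mul_div]

lemma ySlope_pos (hr : 0 < r) : 0 < ySlope r := by
  rw [ySlope_eq]
  exact div_pos (mul_pos hr (xSlope_pos r)) (sub_pos.2 (one_lt_two_mul_xSlope_sq hr))

lemma xSlope_sub_eq (hr : 0 < r) : xSlope r - 1 / (2 * xSlope r) = r / (2 * ySlope r) := by
  have hf := xSlope_pos r
  rw [ySlope_eq]
  field_simp

lemma ySlope_sq_mul_eq (hr : 0 < r) :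
    ySlope r ^ 2 * (2 * xSlope r ^ 2 + 1) = xSlope r ^ 2 := by
  have hden := (sub_pos.2 (one_lt_two_mul_xSlope_sq hr)).ne'
  rw [ySlope_eq, div_pow, div_mul_eq_mul_div, div_eq_iff (pow_ne_zero 2 hden),
    sq_two_mul_xSlope_sq_sub_one]
  ring

lemma xSlope_monotoneOn : MonotoneOn xSlope (Set.Ioi 0) := by
  intro r (hr : 0 < r) s _ hrs
  exact fval_monotoneOn (Set.mem_Ici.2 (by positivity)) (Set.mem_Ici.2 (by positivity)) (by gcongr)

lemma ySlope_sq_monotoneOn : MonotoneOn (fun r => ySlope r ^ 2) (Set.Ioi 0) := by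
  have ySlope_sq_eq {r : ℝ} (hr : 0 < r) : ySlope r ^ 2 = xSlope r ^ 2 / (2 * xSlope r ^ 2 + 1) :=
    eq_div_of_mul_eq (by positivity) (ySlope_sq_mul_eq hr)
  intro r hr s hs hrs
  have hsq : xSlope r ^ 2 ≤ xSlope s ^ 2 :=
    pow_le_pow_left₀ (xSlope_pos r).le (xSlope_monotoneOn hr hs hrs) 2
  simp only [ySlope_sq_eq hr, ySlope_sq_eq hs]
  rw [div_le_div_iff₀ (by positivity) (by positivity)]
  linarith

lemma blockTime_eq_add (A B : ℝ) :
    blockTime A B = A * xSlope (B / A) + B * ySlope (B / A) := by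
  have hratio : (B / A) ^ 2 / 2 = B ^ 2 / (2 * A ^ 2) := by ring
  rw [ySlope, xSlope, hratio, blockTime, mul_div_assoc', ← mul_div_assoc, div_div, ← sq,
    ← mul_assoc, mul_comm A 2]

lemma blockTime_eq_dual {A B : ℝ} (hA : 0 < A) (hB : 0 < B) :
    blockTime A B =
      2 * ySlope (B / A) ^ 2 / xSlope (B / A) * A + 2 * ySlope (B / A) * B := by
  have hr : 0 < B / A := div_pos hB hA
  have hf := xSlope_pos (B / A)
  have hμ := ySlope_pos hr
  have hB_eq : B = B / A * A := (div_mul_cancel₀ B hA.ne').symm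
  have hdiff := xSlope_sub_eq hr
  have hsq := ySlope_sq_mul_eq hr
  rw [blockTime_eq_add]
  generalize B / A = r at *
  subst hB_eq
  field_simp at hdiff ⊢
  linear_combination -hsq + ySlope r * hdiff

end Slopes

section Duality

/-- The summand of the cumulative constraints of `memD` for a single obstacle. -/
def surplus (a b x y : ℝ) : ℝ := x - a ^ 2 / (2 * x) - b ^ 2 / (2 * y)

/- The relation between `f` and `μ` is the stationarity in `x` of the Lagrangian
`x + y - 2 * μ ^ 2 * surplus a b x y` at `x = f * a`; its stationarity in `y` at `y = μ * b` is
automatic. -/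
lemma surplus_dual_bound {f μ a b x y : ℝ} (hf : 0 < f) (hμ : μ ^ 2 * (2 * f ^ 2 + 1) = f ^ 2)
    (hx : 0 < x) (hy : 0 < y) :
    2 * μ ^ 2 * surplus a b x y + (2 * μ ^ 2 / f * a + 2 * μ * b) ≤ x + y := by
  have hx_gap : x - 2 * μ ^ 2 * (x - a ^ 2 / (2 * x)) - 2 * μ ^ 2 / f * a =
      μ ^ 2 * (x - f * a) ^ 2 / (f ^ 2 * x) := by
    field_simp
    linear_combination -x ^ 2 * hμ
  have hy_gap : y + 2 * μ ^ 2 * (b ^ 2 / (2 * y)) - 2 * μ * b = (y - μ * b) ^ 2 / y := by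
    field_simp
    ring
  have hx_nonneg : 0 ≤ μ ^ 2 * (x - f * a) ^ 2 / (f ^ 2 * x) := by positivity
  have hy_nonneg : 0 ≤ (y - μ * b) ^ 2 / y := by positivity
  unfold surplus
  linarith

lemma blockSum_surplus_dual_bound {a b x y : ℕ → ℝ} {p q : ℕ} (hpq : p < q)
    (ha : ∀ j ∈ Icc (p + 1) q, 0 < a j) (hb : ∀ j ∈ Icc (p + 1) q, 0 < b j)
    (hxy : ∀ j ∈ Icc (p + 1) q, 0 < x j ∧ 0 < y j) :
    2 * ySlope (ratioBA a b (p + 1) q) ^ 2 *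
        blockSum (fun j => surplus (a j) (b j) (x j) (y j)) p q +
      blockTime (blockSum a p q) (blockSum b p q) ≤ blockSum (fun j => x j + y j) p q := by
  have hr := ratioBA_pos hpq ha hb
  rw [blockTime_eq_dual (blockSum_pos hpq ha) (blockSum_pos hpq hb), ← ratioBA_eq_blockSum_div]
  simp only [blockSum, mul_sum, ← sum_add_distrib]
  exact sum_le_sum fun j hj =>
    surplus_dual_bound (xSlope_pos _) (ySlope_sq_mul_eq hr) (hxy j hj).1 (hxy j hj).2

lemma sum_mul_nonneg_of_antitone {w s : ℕ → ℝ} {n : ℕ} (hw : 0 ≤ w n)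
    (hanti : ∀ k < n, w (k + 1) ≤ w k) (hs : ∀ k ≤ n + 1, 0 ≤ ∑ i ∈ range k, s i) :
    0 ≤ ∑ i ∈ range (n + 1), w i * s i := by
  suffices hlower : ∀ k ≤ n, w k * ∑ i ∈ range (k + 1), s i ≤ ∑ i ∈ range (k + 1), w i * s i from
    (mul_nonneg hw (hs (n + 1) le_rfl)).trans (hlower n le_rfl)
  intro k hk
  induction k with
  | zero => simp
  | succ k ih =>
    calc w (k + 1) * ∑ i ∈ range (k + 2), s i
        = w (k + 1) * ∑ i ∈ range (k + 1), s i + w (k + 1) * s (k + 1) := by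
          rw [sum_range_succ, mul_add]
      _ ≤ w k * ∑ i ∈ range (k + 1), s i + w (k + 1) * s (k + 1) := by
          gcongr
          exacts [hs (k + 1) (by lia), hanti k hk]
      _ ≤ ∑ i ∈ range (k + 1), w i * s i + w (k + 1) * s (k + 1) := by
          gcongr
          exact ih (by lia)
      _ = ∑ i ∈ range (k + 2), w i * s i := (sum_range_succ _ _).symm

end Duality

section Division

/-- The ratio `(∑ b) / (∑ a)` of the `k`-th block of the division `u`. -/
def blockRatio (a b : ℕ → ℝ) (u : ℕ → ℕ) (k : ℕ) : ℝ := ratioBA a b (u k + 1) (u (k + 1))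

/-- The index of the block of the division `u 0 < ⋯ < u (n + 1)` that contains the obstacle `j`. -/
def blockIndex (u : ℕ → ℕ) (n j : ℕ) : ℕ := Nat.findGreatest (fun k => u k < j) n

variable {ℓ n k j : ℕ} {u : ℕ → ℕ} {a b x y : ℕ → ℝ}

lemma AdmissibleDiv.isDivision (h : AdmissibleDiv ℓ a b n u) : IsDivision ℓ n u :=
  ⟨h.1, h.2.1, h.2.2.1⟩

lemma AdmissibleDiv.admissibleBlock (h : AdmissibleDiv ℓ a b n u) (hk : k ≤ n) :
    AdmissibleBlock a b (u k) (u (k + 1)) :=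
  h.2.2.2 k hk

namespace IsDivision

lemma strictMonoOn (h : IsDivision ℓ n u) : StrictMonoOn u (Set.Iic (n + 1)) :=
  strictMonoOn_Iic_of_lt_succ fun i hi => h.lt_succ i (Nat.lt_succ_iff.1 hi)

lemma le_length (h : IsDivision ℓ n u) (hk : k ≤ n + 1) : u k ≤ ℓ :=
  (h.strictMonoOn.monotoneOn hk Set.self_mem_Iic hk).trans_eq h.last

lemma sum_range_blockSum (h : IsDivision ℓ n u) (g : ℕ → ℝ) (hk : k ≤ n + 1) :
    ∑ i ∈ range k, blockSum g (u i) (u (i + 1)) = blockSum g 0 (u k) := by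
  have hu : MonotoneOn u (Set.Iic k) :=
    h.strictMonoOn.monotoneOn.mono (Set.Iic_subset_Iic.2 hk)
  rw [sum_range_blockSum_consecutive g hu, h.zero]

lemma mem_Icc_one (h : IsDivision ℓ n u) (hk : k ≤ n) (hj : j ∈ Icc (u k + 1) (u (k + 1))) :
    j ∈ Icc 1 ℓ :=
  Icc_subset_Icc (by lia) (h.le_length (by lia)) hj

lemma exists_mem_block (h : IsDivision ℓ n u) (hj : j ∈ Icc 1 ℓ) :
    ∃ k ≤ n, j ∈ Icc (u k + 1) (u (k + 1)) := by
  rw [mem_Icc] at hj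
  have hzero : u 0 < j := h.zero.trans_lt hj.1
  have hlower : u (blockIndex u n j) < j :=
    Nat.findGreatest_spec (P := fun k => u k < j) n.zero_le hzero
  have hindex : blockIndex u n j ≤ n := Nat.findGreatest_le n
  refine ⟨blockIndex u n j, hindex, mem_Icc.2 ⟨hlower, ?_⟩⟩
  rcases hindex.lt_or_eq with hlt | heq
  · exact not_lt.1 (Nat.findGreatest_is_greatest (P := fun k => u k < j) (Nat.lt_succ_self _) hlt)
  · rw [heq, h.last]
    exact hj.2

lemma blockIndex_eq (h : IsDivision ℓ n u) (hk : k ≤ n) (hj : j ∈ Icc (u k + 1) (u (k + 1))) :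
    blockIndex u n j = k := by
  rw [mem_Icc] at hj
  refine Nat.findGreatest_eq_iff.2 ⟨hk, fun _ => hj.1, fun i hki hin => not_lt.2 ?_⟩
  exact hj.2.trans (h.strictMonoOn.monotoneOn (Set.mem_Iic.2 (by lia)) (Set.mem_Iic.2 (by lia)) hki)

lemma blockRatio_pos (h : IsDivision ℓ n u) (ha : ∀ i ∈ Icc 1 ℓ, 0 < a i)
    (hb : ∀ i ∈ Icc 1 ℓ, 0 < b i) (hk : k ≤ n) : 0 < blockRatio a b u k :=
  ratioBA_pos (h.lt_succ k hk) (fun j hj => ha j (h.mem_Icc_one hk hj))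
    (fun j hj => hb j (h.mem_Icc_one hk hj))

lemma Tstar_le_sum (h : IsDivision ℓ n u) (ha : ∀ i ∈ Icc 1 ℓ, 0 < a i)
    (hb : ∀ i ∈ Icc 1 ℓ, 0 < b i) (hanti : ∀ k < n, blockRatio a b u (k + 1) ≤ blockRatio a b u k)
    (hxy : ∀ i ∈ Icc 1 ℓ, 0 < x i ∧ 0 < y i)
    (hsurplus : ∀ k ≤ n + 1, 0 ≤ blockSum (fun j => surplus (a j) (b j) (x j) (y j)) 0 (u k)) :
    Tstar a b n u ≤ ∑ i ∈ Icc 1 ℓ, (x i + y i) := by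
  set s : ℕ → ℝ := fun j => surplus (a j) (b j) (x j) (y j)
  set w : ℕ → ℝ := fun k => 2 * ySlope (blockRatio a b u k) ^ 2
  have hweighted : 0 ≤ ∑ k ∈ range (n + 1), w k * blockSum s (u k) (u (k + 1)) := by
    refine sum_mul_nonneg_of_antitone (by positivity) (fun k hk => ?_) fun k hk => ?_
    · exact mul_le_mul_of_nonneg_left (ySlope_sq_monotoneOn (h.blockRatio_pos ha hb hk)
        (h.blockRatio_pos ha hb hk.le) (hanti k hk)) zero_le_two
    · rw [h.sum_range_blockSum s hk]
      exact hsurplus k hk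
  calc Tstar a b n u
      ≤ ∑ k ∈ range (n + 1), w k * blockSum s (u k) (u (k + 1)) + Tstar a b n u :=
        le_add_of_nonneg_left hweighted
    _ ≤ ∑ k ∈ range (n + 1), blockSum (fun j => x j + y j) (u k) (u (k + 1)) := by
        rw [Tstar, ← sum_add_distrib]
        refine sum_le_sum fun k hk => ?_
        have hkn : k ≤ n := mem_range_succ_iff.1 hk
        exact blockSum_surplus_dual_bound (h.lt_succ k hkn)
          (fun j hj => ha j (h.mem_Icc_one hkn hj))
          (fun j hj => hb j (h.mem_Icc_one hkn hj)) (fun j hj => hxy j (h.mem_Icc_one hkn hj))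
    _ = ∑ i ∈ Icc 1 ℓ, (x i + y i) := by
        rw [h.sum_range_blockSum _ le_rfl, h.last]
        rfl

end IsDivision

end Division

section Canonical

/-- The division `u` with its `k`-th and `(k + 1)`-st blocks merged, that is, without the break
`u (k + 1)`. -/
def mergeBlocks (u : ℕ → ℕ) (k i : ℕ) : ℕ := u (if i ≤ k then i else i + 1)

variable {ℓ n k : ℕ} {u : ℕ → ℕ} {a b : ℕ → ℝ}

lemma forall_mergeBlocks {P : ℕ → ℕ → Prop} (hP : ∀ i ≤ n + 1, P (u i) (u (i + 1)))
    (hmerged : P (u k) (u (k + 2))) :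
    ∀ i ≤ n, P (mergeBlocks u k i) (mergeBlocks u k (i + 1)) := by
  intro i hi
  unfold mergeBlocks
  rcases lt_trichotomy i k with hik | rfl | hki
  · rw [if_pos hik.le, if_pos (Nat.succ_le_of_lt hik)]
    exact hP i (by lia)
  · rw [if_pos le_rfl, if_neg (by lia)]
    exact hmerged
  · rw [if_neg (by lia), if_neg (by lia)]
    exact hP (i + 1) (by lia)

lemma AdmissibleDiv.merge (h : AdmissibleDiv ℓ a b (n + 1) u)
    (ha : ∀ i ∈ Icc 1 ℓ, 0 < a i) (hk : k ≤ n)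
    (hlt : blockRatio a b u k < blockRatio a b u (k + 1)) :
    AdmissibleDiv ℓ a b n (mergeBlocks u k) := by
  have hdiv := h.isDivision
  have hleft : u k < u (k + 1) := hdiv.lt_succ k (by lia)
  have hright : u (k + 1) < u (k + 2) := hdiv.lt_succ (k + 1) (by lia)
  have hapos : ∀ j ∈ Icc (u k + 1) (u (k + 2)), 0 < a j := fun j hj =>
    ha j (Icc_subset_Icc (by lia) (hdiv.le_length (by lia)) hj)
  have hmerged : AdmissibleBlock a b (u k) (u (k + 2)) :=
    (h.admissibleBlock (by lia)).merge (h.admissibleBlock (by lia)) hleft hright hapos hlt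
  refine ⟨?_, ?_, ?_, ?_⟩
  · rw [mergeBlocks, if_pos k.zero_le, hdiv.zero]
  · rw [mergeBlocks, if_neg (by lia), hdiv.last]
  · exact forall_mergeBlocks hdiv.lt_succ (hleft.trans hright)
  · exact forall_mergeBlocks (P := AdmissibleBlock a b) (fun i hi => h.admissibleBlock hi) hmerged

lemma IsCanonicalDiv.blockRatio_succ_le (h : IsCanonicalDiv ℓ a b n u)
    (ha : ∀ i ∈ Icc 1 ℓ, 0 < a i) (hk : k < n) :
    blockRatio a b u (k + 1) ≤ blockRatio a b u k := by
  obtain ⟨hadm, hmem⟩ := h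
  by_contra! hlt
  obtain ⟨n, rfl⟩ : ∃ n', n = n' + 1 := Nat.exists_eq_succ_of_ne_zero (by lia)
  obtain ⟨i, hi, hui⟩ := (hmem (u (k + 1))).1 ⟨k + 1, by lia, rfl⟩ n _
    (hadm.merge ha (Nat.lt_succ_iff.1 hk) hlt)
  have hindex : (if i ≤ k then i else i + 1) = k + 1 :=
    hadm.isDivision.strictMonoOn.injOn (Set.mem_Iic.2 (by split <;> lia))
      (Set.mem_Iic.2 (by lia)) hui
  split at hindex <;> lia

end Canonical

section Attainment

/-- The `x`-coordinates of the point of `D̂` that realizes the time `Tstar a b n u`. -/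
def optimalX (a b : ℕ → ℝ) (n : ℕ) (u : ℕ → ℕ) (j : ℕ) : ℝ :=
  a j * xSlope (blockRatio a b u (blockIndex u n j))

/-- The `y`-coordinates of the point of `D̂` that realizes the time `Tstar a b n u`. -/
def optimalY (a b : ℕ → ℝ) (n : ℕ) (u : ℕ → ℕ) (j : ℕ) : ℝ :=
  b j * ySlope (blockRatio a b u (blockIndex u n j))

lemma surplus_mul_slopes {r : ℝ} (hr : 0 < r) (a b : ℝ) :
    surplus a b (a * xSlope r) (b * ySlope r) = (r * a - b) / (2 * ySlope r) := by
  have hf := xSlope_pos r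
  have hμ := ySlope_pos hr
  calc surplus a b (a * xSlope r) (b * ySlope r)
      = a * (xSlope r - 1 / (2 * xSlope r)) - b / (2 * ySlope r) := by
        unfold surplus
        field_simp
    _ = (r * a - b) / (2 * ySlope r) := by
        rw [xSlope_sub_eq hr]
        ring

variable {ℓ n k m j : ℕ} {u : ℕ → ℕ} {a b : ℕ → ℝ}

namespace IsDivision

lemma optimalX_eq (h : IsDivision ℓ n u) (hk : k ≤ n) (hj : j ∈ Icc (u k + 1) (u (k + 1))) :
    optimalX a b n u j = a j * xSlope (blockRatio a b u k) := by
  rw [optimalX, h.blockIndex_eq hk hj]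

lemma optimalY_eq (h : IsDivision ℓ n u) (hk : k ≤ n) (hj : j ∈ Icc (u k + 1) (u (k + 1))) :
    optimalY a b n u j = b j * ySlope (blockRatio a b u k) := by
  rw [optimalY, h.blockIndex_eq hk hj]

lemma sum_optimalX_add_optimalY (h : IsDivision ℓ n u) :
    ∑ i ∈ Icc 1 ℓ, (optimalX a b n u i + optimalY a b n u i) = Tstar a b n u := by
  have hsplit := h.sum_range_blockSum (fun i => optimalX a b n u i + optimalY a b n u i) le_rfl
  rw [h.last] at hsplit
  refine hsplit.symm.trans (sum_congr rfl fun k hk => ?_)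
  have hkn : k ≤ n := mem_range_succ_iff.1 hk
  rw [blockTime_eq_add, sum_mul, sum_mul, ← sum_add_distrib]
  refine sum_congr rfl fun j hj => ?_
  simp only [h.optimalX_eq hkn hj, h.optimalY_eq hkn hj]
  rfl

lemma optimal_pos (h : IsDivision ℓ n u) (ha : ∀ i ∈ Icc 1 ℓ, 0 < a i)
    (hb : ∀ i ∈ Icc 1 ℓ, 0 < b i) (hj : j ∈ Icc 1 ℓ) :
    0 < optimalX a b n u j ∧ 0 < optimalY a b n u j := by
  obtain ⟨k, hk, hjk⟩ := h.exists_mem_block hj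
  rw [h.optimalX_eq hk hjk, h.optimalY_eq hk hjk]
  exact ⟨mul_pos (ha j hj) (xSlope_pos _),
    mul_pos (hb j hj) (ySlope_pos (h.blockRatio_pos ha hb hk))⟩

lemma blockSum_surplus_optimal (h : IsDivision ℓ n u) (ha : ∀ i ∈ Icc 1 ℓ, 0 < a i)
    (hb : ∀ i ∈ Icc 1 ℓ, 0 < b i) (hk : k ≤ n) (hm : m ≤ u (k + 1)) :
    blockSum (fun j => surplus (a j) (b j) (optimalX a b n u j) (optimalY a b n u j)) (u k) m =
      (blockRatio a b u k * blockSum a (u k) m - blockSum b (u k) m) /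
        (2 * ySlope (blockRatio a b u k)) := by
  simp only [blockSum]
  rw [mul_sum, ← sum_sub_distrib, sum_div]
  refine sum_congr rfl fun j hj => ?_
  have hjk : j ∈ Icc (u k + 1) (u (k + 1)) := Icc_subset_Icc_right hm hj
  rw [h.optimalX_eq hk hjk, h.optimalY_eq hk hjk, surplus_mul_slopes (h.blockRatio_pos ha hb hk)]

lemma blockSum_surplus_optimal_eq_zero (h : IsDivision ℓ n u) (ha : ∀ i ∈ Icc 1 ℓ, 0 < a i)
    (hb : ∀ i ∈ Icc 1 ℓ, 0 < b i) (hk : k ≤ n + 1) :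
    blockSum (fun j => surplus (a j) (b j) (optimalX a b n u j) (optimalY a b n u j)) 0 (u k) =
      0 := by
  rw [← h.sum_range_blockSum _ hk]
  refine sum_eq_zero fun i hi => ?_
  have hin : i ≤ n := by
    rw [mem_range] at hi
    lia
  have hA := blockSum_pos (h.lt_succ i hin) fun j hj => ha j (h.mem_Icc_one hin hj)
  rw [h.blockSum_surplus_optimal ha hb hin le_rfl, blockRatio, ratioBA_eq_blockSum_div,
    div_mul_cancel₀ _ hA.ne', sub_self, zero_div]

end IsDivision

namespace AdmissibleDiv

lemma ratioBA_prefix_le (h : AdmissibleDiv ℓ a b n u) (ha : ∀ i ∈ Icc 1 ℓ, 0 < a i)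
    (hk : k ≤ n) (hm : m ∈ Icc (u k + 1) (u (k + 1))) :
    ratioBA a b (u k + 1) m ≤ blockRatio a b u k := by
  rw [mem_Icc] at hm
  rcases hm.2.lt_or_eq with hlt | rfl
  · exact (lt_ratioBA_of_le_of_lt hm.1 hlt (fun j hj => ha j (h.isDivision.mem_Icc_one hk hj))
      le_rfl (h.admissibleBlock hk m hm.1 hlt)).le
  · exact le_rfl

lemma blockSum_surplus_optimal_nonneg (h : AdmissibleDiv ℓ a b n u) (ha : ∀ i ∈ Icc 1 ℓ, 0 < a i)
    (hb : ∀ i ∈ Icc 1 ℓ, 0 < b i) (hm : m ∈ Icc 1 ℓ) :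
    0 ≤ blockSum (fun j => surplus (a j) (b j) (optimalX a b n u j) (optimalY a b n u j)) 0 m := by
  have hdiv := h.isDivision
  obtain ⟨k, hk, hmk⟩ := hdiv.exists_mem_block hm
  have hle := h.ratioBA_prefix_le ha hk hmk
  rw [mem_Icc] at hmk
  have hA : 0 < blockSum a (u k) m := blockSum_pos hmk.1 fun j hj =>
    ha j (hdiv.mem_Icc_one hk (Icc_subset_Icc_right hmk.2 hj))
  rw [ratioBA_eq_blockSum_div, div_le_iff₀ hA] at hle
  rw [← blockSum_add_blockSum _ (u k).zero_le (Nat.le_of_succ_le hmk.1),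
    hdiv.blockSum_surplus_optimal_eq_zero ha hb (by lia), zero_add,
    hdiv.blockSum_surplus_optimal ha hb hk hmk.2]
  exact div_nonneg (sub_nonneg.2 hle)
    (mul_nonneg zero_le_two (ySlope_pos (hdiv.blockRatio_pos ha hb hk)).le)

lemma memDhat_optimal (h : AdmissibleDiv ℓ a b n u) (ha : ∀ i ∈ Icc 1 ℓ, 0 < a i)
    (hb : ∀ i ∈ Icc 1 ℓ, 0 < b i) (hT : Tstar a b n u ≤ 1) :
    memDhat ℓ a b (optimalX a b n u) (optimalY a b n u) := by
  have hdiv := h.isDivision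
  have hend := hdiv.blockSum_surplus_optimal_eq_zero ha hb le_rfl
  rw [hdiv.last] at hend
  exact ⟨⟨fun i hi => hdiv.optimal_pos ha hb hi, hdiv.sum_optimalX_add_optimalY.trans_le hT,
    fun m hm => h.blockSum_surplus_optimal_nonneg ha hb hm⟩, hend⟩

end AdmissibleDiv

end Attainment

lemma IsCanonicalDiv.Tstar_le_one_of_memD {ℓ n : ℕ} {u : ℕ → ℕ} {a b x y : ℕ → ℝ}
    (h : IsCanonicalDiv ℓ a b n u) (ha : ∀ i ∈ Icc 1 ℓ, 0 < a i) (hb : ∀ i ∈ Icc 1 ℓ, 0 < b i)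
    (hD : memD ℓ a b x y) : Tstar a b n u ≤ 1 := by
  obtain ⟨hxy, htime, hsurplus⟩ := hD
  have hdiv := h.1.isDivision
  refine (hdiv.Tstar_le_sum ha hb (fun k hk => h.blockRatio_succ_le ha hk) hxy
    fun k hk => ?_).trans htime
  rcases (u k).eq_zero_or_pos with hzero | hpos
  · simp [hzero, blockSum]
  · exact hsurplus (u k) (mem_Icc.2 ⟨hpos, hdiv.le_length hk⟩)

/-- `D̂` is nonempty iff `T* ≤ 1`, where `T*` is the total optimal time of the
canonical admissible division into blocks. -/
theorem Dhat_nonempty_iff_general (ℓ : ℕ) (hℓ : 1 ≤ ℓ) (a b : ℕ → ℝ)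
    (ha : ∀ i ∈ Finset.Icc 1 ℓ, 0 < a i) (hb : ∀ i ∈ Finset.Icc 1 ℓ, 0 < b i)
    (nstar : ℕ) (ustar : ℕ → ℕ) (hcanon : IsCanonicalDiv ℓ a b nstar ustar) :
    (∃ x y : ℕ → ℝ, memDhat ℓ a b x y) ↔ Tstar a b nstar ustar ≤ 1 := by
  constructor
  · rintro ⟨x, y, hD, -⟩
    exact hcanon.Tstar_le_one_of_memD ha hb hD
  · intro hT
    exact ⟨_, _, hcanon.1.memDhat_optimal ha hb hT⟩
end
end

section
/- Let (c_1,…,c_{ℓ−1}) ∈ D^c, let m ∈ {1,…,ℓ} and let C ∈ I(c_m) (with the conventions c_0 = c_ℓ = 0). Then the set D^m_x(c_{m−1}, C) is a closed interval, i.e., a closed convex subset of ℝ. -/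
open Finset

noncomputable section

/-!
For fixed `x` the term `b_m² / (2 y)` sweeps out all of `[b_m² / (2 (N - x)), ∞)` as `y` runs over
`(0, N - x]`, so `x` lies in the projection exactly when the choice `y = N - x` already gives a
value at least `C`. The projection is therefore a superlevel set of
`g(x) = x - a_m² / (2 x) - b_m² / (2 (N - x))` on `(0, N)`. Since `g` is concave, this set is
convex; since `g` is continuous and tends to `-∞` at both ends of `(0, N)`, it is closed in `ℝ`.
-/

open Filter Topology

section General

theorem isClosed_superlevel_of_tendsto_atBot {X β : Type*} [TopologicalSpace X] [LinearOrder β]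
    [NoBotOrder β] {f : X → β} {s : Set X} (hf : UpperSemicontinuousOn f s)
    (hbdry : ∀ p ∈ closure s \ s, Tendsto f (𝓝[s] p) atBot) (r : β) :
    IsClosed {x ∈ s | r ≤ f x} := by
  refine isClosed_iff_frequently.2 fun p hp ↦ ?_
  have frequently_ge : ∃ᶠ x in 𝓝[s] p, r ≤ f x := frequently_nhdsWithin_iff.2 (by
    simpa only [Set.mem_ofPred_eq, and_comm] using hp)
  by_cases hps : p ∈ s
  · exact ⟨hps, hf.frequently p hps r frequently_ge⟩
  · have hp_closure : p ∈ closure s := mem_closure_iff_frequently.2 (hp.mono fun _ hx ↦ hx.1)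
    have eventually_lt : ∀ᶠ x in 𝓝[s] p, f x < r :=
      (hbdry p ⟨hp_closure, hps⟩).eventually_lt_atBot r
    obtain ⟨x, hge, hlt⟩ := (frequently_ge.and_eventually eventually_lt).exists
    exact absurd hge hlt.not_ge

variable {𝕜 : Type*} [Field 𝕜] [LinearOrder 𝕜] [IsStrictOrderedRing 𝕜] {k : 𝕜}

theorem exists_pos_le_and_div_eq_iff (hk : 0 < k) {M v : 𝕜} :
    (∃ y, 0 < y ∧ y ≤ M ∧ k / y = v) ↔ 0 < M ∧ k / M ≤ v := by
  constructor
  · rintro ⟨y, hy, hyM, rfl⟩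
    exact ⟨hy.trans_le hyM, div_le_div_of_nonneg_left hk.le hy hyM⟩
  · rintro ⟨hM, hv⟩
    have hv0 : 0 < v := (div_pos hk hM).trans_le hv
    exact ⟨k / v, div_pos hk hv0, (div_le_comm₀ hM hv0).1 hv, div_div_cancel₀ hk.ne'⟩

theorem convexOn_const_div (hk : 0 ≤ k) : ConvexOn 𝕜 (Set.Ioi 0) fun x : 𝕜 ↦ k / x := by
  simpa only [zpow_neg_one, smul_eq_mul, ← div_eq_mul_inv] using (convexOn_zpow (-1)).smul hk

theorem tendsto_const_sub_const_div_nhdsGT_zero_atBot [TopologicalSpace 𝕜] [OrderTopology 𝕜]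
    (hk : 0 < k) (M : 𝕜) : Tendsto (fun x : 𝕜 ↦ M - k / x) (𝓝[>] 0) atBot := by
  have hdiv : Tendsto (fun x : 𝕜 ↦ k / x) (𝓝[>] 0) atTop := by
    simpa only [div_eq_mul_inv] using tendsto_inv_nhdsGT_zero.const_mul_atTop hk
  simpa only [sub_eq_add_neg, Function.comp_apply] using
    tendsto_atBot_add_const_left _ M (tendsto_neg_atTop_atBot.comp hdiv)

theorem tendsto_const_sub_nhdsLT_nhdsGT_zero {G : Type*} [AddCommGroup G] [LinearOrder G]
    [IsOrderedAddMonoid G] [TopologicalSpace G] [OrderTopology G] (N : G) :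
    Tendsto (fun x : G ↦ N - x) (𝓝[<] N) (𝓝[>] 0) := by
  refine tendsto_nhdsWithin_iff.2 ⟨?_, ?_⟩
  · exact ((continuous_const.sub continuous_id).tendsto' N 0 (sub_self N)).mono_left inf_le_left
  · filter_upwards [self_mem_nhdsWithin] with x hx using sub_pos.2 hx

end General

/-- The largest gain `x - α² / (2 x) - β² / (2 y)` attainable with `0 < y ≤ N - x`; it bounds
`c' - c` for the points of `D^m(c, c')` above `x`. Meaningful only for `0 < x < N`, since division
by zero gives `0` at the endpoints. -/
def maxGain (α β N x : ℝ) : ℝ := x - α ^ 2 / (2 * x) - β ^ 2 / (2 * (N - x))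

section MaxGain

variable {α β : ℝ}

theorem maxGain_eq (α β N x : ℝ) :
    maxGain α β N x = x - α ^ 2 / 2 / x - β ^ 2 / 2 / (N - x) := by
  simp only [maxGain, div_div]

theorem concaveOn_maxGain (α β N : ℝ) : ConcaveOn ℝ (Set.Ioo 0 N) (maxGain α β N) := by
  have hα : ConvexOn ℝ (Set.Ioo 0 N) fun x ↦ α ^ 2 / 2 / x :=
    (convexOn_const_div (by positivity)).subset (fun _ hx ↦ hx.1) (convex_Ioo 0 N)
  have hβ : ConvexOn ℝ (Set.Ioo 0 N) fun x ↦ β ^ 2 / 2 / (N - x) :=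
    ((convexOn_const_div (by positivity)).comp_affineMap
      (AffineMap.const ℝ ℝ N - AffineMap.id ℝ ℝ)).subset
      (fun _ hx ↦ sub_pos.2 hx.2) (convex_Ioo 0 N)
  exact (((concaveOn_id (convex_Ioo 0 N)).sub hα).sub hβ).congr fun x _ ↦
    (maxGain_eq α β N x).symm

theorem continuousOn_maxGain (α β N : ℝ) : ContinuousOn (maxGain α β N) (Set.Ioo 0 N) :=
  (concaveOn_maxGain α β N).continuousOn isOpen_Ioo

theorem tendsto_maxGain_nhdsWithin_zero_atBot (hα : α ≠ 0) (β N : ℝ) :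
    Tendsto (maxGain α β N) (𝓝[Set.Ioo 0 N] 0) atBot := by
  have hbound : ∀ x ∈ Set.Ioo 0 N, maxGain α β N x ≤ N - α ^ 2 / 2 / x := fun x hx ↦ by
    have : 0 ≤ β ^ 2 / 2 / (N - x) := div_nonneg (by positivity) (sub_pos.2 hx.2).le
    linarith [maxGain_eq α β N x, hx.2]
  refine tendsto_atBot_mono' _ (eventually_nhdsWithin_of_forall hbound) ?_
  exact (tendsto_const_sub_const_div_nhdsGT_zero_atBot (by positivity) N).mono_left
    (nhdsWithin_mono 0 fun _ hx ↦ hx.1)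

theorem tendsto_maxGain_nhdsWithin_right_atBot (α : ℝ) (hβ : β ≠ 0) (N : ℝ) :
    Tendsto (maxGain α β N) (𝓝[Set.Ioo 0 N] N) atBot := by
  have hbound : ∀ x ∈ Set.Ioo 0 N, maxGain α β N x ≤ N - β ^ 2 / 2 / (N - x) := fun x hx ↦ by
    have : 0 ≤ α ^ 2 / 2 / x := div_nonneg (by positivity) hx.1.le
    linarith [maxGain_eq α β N x, hx.2]
  refine tendsto_atBot_mono' _ (eventually_nhdsWithin_of_forall hbound) ?_
  exact ((tendsto_const_sub_const_div_nhdsGT_zero_atBot (by positivity) N).comp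
    (tendsto_const_sub_nhdsLT_nhdsGT_zero N)).mono_left (nhdsWithin_mono N fun _ hx ↦ hx.2)

theorem isClosed_superlevel_maxGain (hα : α ≠ 0) (hβ : β ≠ 0) (N r : ℝ) :
    IsClosed {x ∈ Set.Ioo 0 N | r ≤ maxGain α β N x} := by
  refine isClosed_superlevel_of_tendsto_atBot (continuousOn_maxGain α β N).upperSemicontinuousOn
    (fun p ⟨hp_closure, hp⟩ ↦ ?_) r
  obtain ⟨h0p, hpN⟩ : p ∈ Set.Icc 0 N :=
    closure_minimal Set.Ioo_subset_Icc_self isClosed_Icc hp_closure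
  obtain rfl | hp0 := h0p.eq_or_lt
  · exact tendsto_maxGain_nhdsWithin_zero_atBot hα β N
  · obtain rfl : p = N := hpN.eq_of_not_lt fun hpN' ↦ hp ⟨hp0, hpN'⟩
    exact tendsto_maxGain_nhdsWithin_right_atBot α hβ p

end MaxGain

section Projection

variable {a b : ℕ → ℝ} {N : ℝ} {m : ℕ}

theorem Dmx_eq_superlevel_maxGain (hb : b m ≠ 0) (c C : ℝ) :
    Dmx a b N m c C = {x ∈ Set.Ioo 0 N | C - c ≤ maxGain (a m) (b m) N x} := by
  ext x
  have hbm : 0 < b m ^ 2 / 2 := by positivity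
  calc x ∈ Dmx a b N m c C
    _ ↔ 0 < x ∧ ∃ y, 0 < y ∧ y ≤ N - x ∧ b m ^ 2 / 2 / y = c + x - a m ^ 2 / 2 / x - C := by
      simp only [Dmx, memDm, Set.mem_ofPred_eq, exists_and_left, ← div_div, le_sub_iff_add_le',
        eq_sub_iff_add_eq, add_comm, eq_comm]
    _ ↔ 0 < x ∧ 0 < N - x ∧ b m ^ 2 / 2 / (N - x) ≤ c + x - a m ^ 2 / 2 / x - C := by
      rw [exists_pos_le_and_div_eq_iff hbm]
    _ ↔ x ∈ {x ∈ Set.Ioo 0 N | C - c ≤ maxGain (a m) (b m) N x} := by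
      rw [Set.mem_ofPred_eq, maxGain_eq, Set.mem_Ioo, and_assoc, sub_pos]
      grind

theorem Dmx_closed_interval_general (ha : a m ≠ 0) (hb : b m ≠ 0) (c C : ℝ) :
    IsClosed (Dmx a b N m c C) ∧ Convex ℝ (Dmx a b N m c C) := by
  rw [Dmx_eq_superlevel_maxGain hb]
  exact ⟨isClosed_superlevel_maxGain ha hb N (C - c),
    (concaveOn_maxGain (a m) (b m) N).convex_ge (C - c)⟩

end Projection

/-- For `(c_1,…,c_{ℓ−1}) ∈ D^c`, `m ∈ {1,…,ℓ}` and `C ∈ I(c_m)`, the set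
`D^m_x(c_{m−1}, C)` is a closed interval, i.e. a closed convex subset of `ℝ`. -/
theorem Dmx_closed_interval (ℓ : ℕ) (hℓ : 1 ≤ ℓ) (a b : ℕ → ℝ)
    (ha : ∀ i ∈ Finset.Icc 1 ℓ, 0 < a i) (hb : ∀ i ∈ Finset.Icc 1 ℓ, 0 < b i)
    (N : ℝ) (hN : 1 < N)
    (c : ℕ → ℝ) (hc : memDc ℓ a b N c)
    (m : ℕ) (hm : m ∈ Finset.Icc 1 ℓ)
    (C : ℝ) (hC : memDc ℓ a b N (Function.update c m C)) :
    IsClosed (Dmx a b N m (cbar ℓ c (m - 1)) C) ∧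
    Convex ℝ (Dmx a b N m (cbar ℓ c (m - 1)) C) :=
  Dmx_closed_interval_general (ha m hm).ne' (hb m hm).ne' _ C
end
end

section
/- Let (c_1,…,c_{ℓ−1}) ∈ D^c and m ∈ {1,…,ℓ−1} (with the conventions c_0 = c_ℓ = 0). For all Ĉ ∈ I(c_m), all x̂ ∈ D^m_x(c_{m−1}, Ĉ) and all ε > 0 such that {x ∈ ℝ : |x − x̂| < 2ε} ⊆ D^m_x(c_{m−1}, Ĉ), there exists δ > 0 such that for all C ∈ I(c_m) with |C − Ĉ| < δ one has {x ∈ ℝ : |x − x̂| < ε} ⊆ D^m_x(c_{m−1}, C). -/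
open Finset

noncomputable section

/-!
Solving the equation of `D^m(c, C)` for `y` shows that `D^m_x(c, C)` is the superlevel set
`{x ∈ (0, N) | C ≤ φ x}` of a function `φ` that is strictly concave and does not depend on `C`.
A strictly concave function that is at least `Ĉ` on an open set is larger than `Ĉ` there, hence
uniformly larger on compact subsets, and the gap on a smaller concentric ball serves as `δ`.
-/

section Concavity

theorem lt_of_strictConcaveOn_of_forall_le {E : Type*} [AddCommGroup E] [Module ℝ E]
    [TopologicalSpace E] [ContinuousAdd E] [ContinuousSMul ℝ E] [Nontrivial E]
    {s U : Set E} {f : E → ℝ} {k : ℝ} {x : E} (hf : StrictConcaveOn ℝ s f)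
    (hU : IsOpen U) (hUs : U ⊆ s) (hk : ∀ y ∈ U, k ≤ f y) (hx : x ∈ U) : k < f x := by
  obtain ⟨v, hv⟩ := exists_ne (0 : E)
  have line_mem : ∀ w : E, ∀ᶠ t : ℝ in nhdsWithin 0 (Set.Ioi 0), x + t • w ∈ U := fun w =>
    nhdsWithin_le_nhds <|
      (by fun_prop : Continuous fun t : ℝ => x + t • w).continuousAt.eventually_mem
        (hU.mem_nhds (by simpa using hx))
  obtain ⟨t, ⟨hadd, hsub⟩, ht⟩ :=
    (((line_mem v).and (line_mem (-v))).and self_mem_nhdsWithin).exists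
  have hne : x + t • v ≠ x + t • -v := fun heq =>
    smul_ne_zero (mul_pos two_pos ht).ne' hv
      (by linear_combination (norm := module) heq : (2 * t) • v = 0)
  have hmid : (1 / 2 : ℝ) • (x + t • v) + (1 / 2 : ℝ) • (x + t • -v) = x := by module
  have hlt := hf.2 (hUs hadd) (hUs hsub) hne one_half_pos one_half_pos (add_halves 1)
  rw [hmid, smul_eq_mul, smul_eq_mul] at hlt
  linarith [hk _ hadd, hk _ hsub]

theorem exists_gt_forall_le_of_strictConcaveOn {E : Type*} [NormedAddCommGroup E]
    [NormedSpace ℝ E] [FiniteDimensional ℝ E] [Nontrivial E]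
    {s U K : Set E} {f : E → ℝ} {k : ℝ} (hf : StrictConcaveOn ℝ s f)
    (hU : IsOpen U) (hUs : U ⊆ s) (hk : ∀ y ∈ U, k ≤ f y) (hK : IsCompact K) (hKU : K ⊆ U) :
    ∃ k' > k, ∀ x ∈ K, k' ≤ f x :=
  hK.exists_forall_le'
    (hf.concaveOn.continuousOn_interior.mono (hKU.trans (interior_maximal hUs hU)))
    fun _ hx => lt_of_strictConcaveOn_of_forall_le hf hU hUs hk (hKU hx)

theorem strictConvexOn_const_mul {𝕜 E : Type*} [CommSemiring 𝕜] [PartialOrder 𝕜]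
    [PosMulStrictMono 𝕜] [AddCommMonoid E] [SMul 𝕜 E] {s : Set E} {f : E → 𝕜} {r : 𝕜}
    (hr : 0 < r) (hf : StrictConvexOn 𝕜 s f) : StrictConvexOn 𝕜 s fun x => r * f x := by
  refine ⟨hf.1, fun x hx y hy hxy p q hp hq hpq => ?_⟩
  calc r * f (p • x + q • y)
      < r * (p • f x + q • f y) := mul_lt_mul_of_pos_left (hf.2 hx hy hxy hp hq hpq) hr
    _ = p • (r * f x) + q • (r * f y) := by simp only [smul_eq_mul]; ring

theorem strictConvexOn_inv_Ioi : StrictConvexOn ℝ (Set.Ioi 0) fun x : ℝ => x⁻¹ := by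
  simpa only [zpow_neg_one] using strictConvexOn_zpow (m := -1) (by norm_num) (by norm_num)

theorem strictConvexOn_inv_const_sub (N : ℝ) :
    StrictConvexOn ℝ (Set.Iio N) fun x : ℝ => (N - x)⁻¹ := by
  have himage : (fun x => N - x) '' Set.Iio N = Set.Ioi 0 := by simp
  have haffine : ConcaveOn ℝ (Set.Iio N) fun x => N - x :=
    (concaveOn_const N (convex_Iio N)).sub (convexOn_id (convex_Iio N))
  refine StrictConvexOn.comp_concaveOn (f := fun x => N - x) (g := fun x => x⁻¹)
    ?_ haffine ?_ sub_right_injective.injOn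
  · rw [himage]
    exact strictConvexOn_inv_Ioi
  · rw [himage]
    exact fun x hx y _ hxy => inv_anti₀ hx hxy

end Concavity

theorem exists_le_div_eq_iff {𝕜 : Type*} [Field 𝕜] [LinearOrder 𝕜] [IsStrictOrderedRing 𝕜]
    {r s t : 𝕜} (hr : 0 < r) : (∃ y, 0 < y ∧ y ≤ s ∧ r / y = t) ↔ 0 < s ∧ r / s ≤ t := by
  constructor
  · rintro ⟨y, hy, hys, rfl⟩
    exact ⟨hy.trans_le hys, div_le_div_of_nonneg_left hr.le hy hys⟩
  · rintro ⟨hs, hst⟩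
    have ht : 0 < t := (div_pos hr hs).trans_le hst
    exact ⟨r / t, div_pos hr ht, (div_le_comm₀ hs ht).1 hst, div_div_cancel₀ hr.ne'⟩

section Dmx

variable {a b : ℕ → ℝ} {N : ℝ} {m : ℕ}

/-- The largest `C` with `x ∈ D^m_x(c, C)`, for `0 < x < N`. It is attained at `y = N - x`, the
largest `y` allowed by `x + y ≤ N`. -/
def maxLevel (a b : ℕ → ℝ) (N : ℝ) (m : ℕ) (c x : ℝ) : ℝ :=
  c + x - a m ^ 2 / (2 * x) - b m ^ 2 / (2 * (N - x))

theorem mem_Dmx_iff (hb : b m ≠ 0) {c C x : ℝ} :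
    x ∈ Dmx a b N m c C ↔ x ∈ Set.Ioo 0 N ∧ C ≤ maxLevel a b N m c x := by
  have hy (y : ℝ) : memDm a b N m c C x y ↔
      0 < x ∧ 0 < y ∧ y ≤ N - x ∧ b m ^ 2 / 2 / y = c + x - a m ^ 2 / (2 * x) - C := by
    rw [memDm, div_div, le_sub_iff_add_le', eq_sub_iff_add_eq, sub_eq_iff_eq_add', eq_comm]
  calc x ∈ Dmx a b N m c C
      ↔ 0 < x ∧ ∃ y, 0 < y ∧ y ≤ N - x ∧
          b m ^ 2 / 2 / y = c + x - a m ^ 2 / (2 * x) - C := by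
        rw [← exists_and_left]
        exact exists_congr hy
    _ ↔ 0 < x ∧ 0 < N - x ∧ b m ^ 2 / 2 / (N - x) ≤ c + x - a m ^ 2 / (2 * x) - C := by
        rw [exists_le_div_eq_iff (by positivity)]
    _ ↔ x ∈ Set.Ioo 0 N ∧ C ≤ maxLevel a b N m c x := by
        rw [sub_pos, div_div, le_sub_comm, ← and_assoc, Set.mem_Ioo, maxLevel]

theorem strictConcaveOn_maxLevel (hb : b m ≠ 0) (c : ℝ) :
    StrictConcaveOn ℝ (Set.Ioo 0 N) (maxLevel a b N m c) := by
  have hconv : Convex ℝ (Set.Ioo 0 N) := convex_Ioo 0 N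
  have hlinear : ConcaveOn ℝ (Set.Ioo 0 N) fun x => c + x :=
    (concaveOn_const c hconv).add (concaveOn_id hconv)
  have hbranch : ConvexOn ℝ (Set.Ioo 0 N) fun x => a m ^ 2 / 2 * x⁻¹ :=
    (strictConvexOn_inv_Ioi.convexOn.smul (by positivity)).subset Set.Ioo_subset_Ioi_self hconv
  have hobstacle : StrictConvexOn ℝ (Set.Ioo 0 N) fun x => b m ^ 2 / 2 * (N - x)⁻¹ :=
    (strictConvexOn_const_mul (by positivity) (strictConvexOn_inv_const_sub N)).subset
      Set.Ioo_subset_Iio_self hconv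
  refine ((hlinear.sub hbranch).sub_strictConvexOn hobstacle).congr fun x _ => ?_
  simp only [maxLevel, Pi.sub_apply, ← div_eq_mul_inv, div_div]

theorem exists_gt_subset_Dmx (hb : b m ≠ 0) {c Chat : ℝ} {U K : Set ℝ} (hU : IsOpen U)
    (hUD : U ⊆ Dmx a b N m c Chat) (hK : IsCompact K) (hKU : K ⊆ U) :
    ∃ C' > Chat, ∀ C ≤ C', K ⊆ Dmx a b N m c C := by
  obtain ⟨C', hC', hle⟩ := exists_gt_forall_le_of_strictConcaveOn
    (strictConcaveOn_maxLevel hb c) hU (fun x hx => ((mem_Dmx_iff hb).1 (hUD hx)).1)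
    (fun x hx => ((mem_Dmx_iff hb).1 (hUD hx)).2) hK hKU
  exact ⟨C', hC', fun C hC x hx =>
    (mem_Dmx_iff hb).2 ⟨((mem_Dmx_iff hb).1 (hUD (hKU hx))).1, hC.trans (hle x hx)⟩⟩

theorem Dmx_continuous_in_C_general (hb : b m ≠ 0) {c Chat xhat r R : ℝ} (hrR : r < R)
    (hball : Metric.ball xhat R ⊆ Dmx a b N m c Chat) :
    ∃ δ > 0, ∀ C < Chat + δ, Metric.ball xhat r ⊆ Dmx a b N m c C := by
  obtain ⟨C', hC', hsub⟩ := exists_gt_subset_Dmx hb Metric.isOpen_ball hball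
    (isCompact_closedBall xhat r) (Metric.closedBall_subset_ball hrR)
  exact ⟨C' - Chat, sub_pos.2 hC', fun C hC =>
    Metric.ball_subset_closedBall.trans (hsub C (by linarith))⟩

end Dmx

/-- Continuity of the domain `D^m_x(c_{m−1}, ·)`: if a `2ε`-ball around `x̂`
lies in `D^m_x(c_{m−1}, Ĉ)`, then for `C ∈ I(c_m)` close enough to `Ĉ`, the `ε`-ball around
`x̂` lies in `D^m_x(c_{m−1}, C)`. -/
theorem Dmx_continuous_in_C (ℓ : ℕ) (hℓ : 1 ≤ ℓ) (a b : ℕ → ℝ)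
    (ha : ∀ i ∈ Finset.Icc 1 ℓ, 0 < a i) (hb : ∀ i ∈ Finset.Icc 1 ℓ, 0 < b i)
    (N : ℝ) (hN : 1 < N)
    (c : ℕ → ℝ) (hc : memDc ℓ a b N c)
    (m : ℕ) (hm1 : 1 ≤ m) (hm2 : m < ℓ)
    (Chat : ℝ) (hChat : memDc ℓ a b N (Function.update c m Chat))
    (xhat : ℝ) (hxhat : xhat ∈ Dmx a b N m (cbar ℓ c (m - 1)) Chat)
    (ε : ℝ) (hε : 0 < ε)
    (hball : ∀ x : ℝ, |x - xhat| < 2 * ε → x ∈ Dmx a b N m (cbar ℓ c (m - 1)) Chat) :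
    ∃ δ : ℝ, 0 < δ ∧
      ∀ C : ℝ, memDc ℓ a b N (Function.update c m C) → |C - Chat| < δ →
        ∀ x : ℝ, |x - xhat| < ε → x ∈ Dmx a b N m (cbar ℓ c (m - 1)) C := by
  obtain ⟨δ, hδ, hsub⟩ := Dmx_continuous_in_C_general
    (hb m (Finset.mem_Icc.2 ⟨hm1, hm2.le⟩)).ne' (by linarith : ε < 2 * ε) hball
  exact ⟨δ, hδ, fun C _ hC x hx => hsub C (sub_lt_iff_lt_add'.1 (abs_lt.1 hC).2) hx⟩
end
end
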